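/- arXiv:2401.00612 — 3 statements merged into one kernel-verified Lean document; each statement's English description precedes it below -/
import Mathlib

section
/- Let (ε_n)_{n=1}^∞ be a sequence of nonnegative real numbers with Σ_{n=1}^∞ ε_n < ∞. Then every normalized (1+ε_n)-bounded M-basis {x_n, x_n*}_{n∈ℕ} of the real Hilbert space ℓ² is equivalent to an orthonormal basis of ℓ²; that is, there exists a bounded invertible linear operator T on ℓ² with T e_n = x_n for all n, where (e_n) is the standard orthonormal basis. -/
open scoped BigOperators

/-!
Write `y n` for the vector representing `xs n`. Then `‖x n - y n‖ ^ 2 = ‖y n‖ ^ 2 - 1`, which is at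
most `ε n * (2 + ε n)`, so the two biorthogonal families are quadratically close. If
`u = ∑ a n • x n` and `v = ∑ a n • y n` are finite sums with the same coefficients, then
`⟪v, u⟫ = ∑ ‖a n‖ ^ 2`, and hence `‖u‖ ^ 2 + ‖v‖ ^ 2 = ‖u - v‖ ^ 2 + 2 * ∑ ‖a n‖ ^ 2`. This bounds
both `u` and `v` from above, and `⟪v, u⟫ ≤ ‖v‖ * ‖u‖` turns the upper bound for `v` into a lower
bound for `u`.
-/

open Filter Asymptotics Topology
open scoped InnerProductSpace

section RieszBounds

variable {ι 𝕜 E : Type*} [NormedField 𝕜] [SeminormedAddCommGroup E] [NormedSpace 𝕜 E]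

variable (𝕜) in
/-- The upper Riesz inequality with constant `K`; in a Hilbert space it says that `x` is a Bessel
sequence with bound `K`. -/
def HasUpperRieszBound (x : ι → E) (K : ℝ) : Prop :=
  ∀ (s : Finset ι) (a : ι → 𝕜), ‖∑ n ∈ s, a n • x n‖ ^ 2 ≤ K * ∑ n ∈ s, ‖a n‖ ^ 2

variable (𝕜) in
/-- The lower Riesz inequality, with the constant `K` placed on the side of the vector: it is the
reciprocal of the usual lower Riesz bound. -/
def HasLowerRieszBound (x : ι → E) (K : ℝ) : Prop :=
  ∀ (s : Finset ι) (a : ι → 𝕜), ∑ n ∈ s, ‖a n‖ ^ 2 ≤ K * ‖∑ n ∈ s, a n • x n‖ ^ 2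

theorem norm_sum_smul_sq_le (s : Finset ι) (a : ι → 𝕜) (d : ι → E) :
    ‖∑ n ∈ s, a n • d n‖ ^ 2 ≤ (∑ n ∈ s, ‖a n‖ ^ 2) * ∑ n ∈ s, ‖d n‖ ^ 2 :=
  calc ‖∑ n ∈ s, a n • d n‖ ^ 2 ≤ (∑ n ∈ s, ‖a n‖ * ‖d n‖) ^ 2 := by
        gcongr
        exact norm_sum_le_of_le s fun n _ => norm_smul_le (a n) (d n)
    _ ≤ (∑ n ∈ s, ‖a n‖ ^ 2) * ∑ n ∈ s, ‖d n‖ ^ 2 := Finset.sum_mul_sq_le_sq_mul_sq s _ _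

end RieszBounds

section Synthesis

variable {ι 𝕜 E : Type*} [NormedField 𝕜] [NormedAddCommGroup E] [NormedSpace 𝕜 E] {x : ι → E}
  {K : ℝ}

theorem hasSum_norm_sq_lp_two {F : ι → Type*} [∀ n, NormedAddCommGroup (F n)] (a : lp F 2) :
    HasSum (fun n => ‖a n‖ ^ 2) (‖a‖ ^ 2) := by
  simpa using lp.hasSum_norm (p := 2) (by norm_num) a

theorem le_sqrt_mul_of_sq_le_mul_sq {b c : ℝ} (hc : 0 ≤ c) (h : b ^ 2 ≤ K * c ^ 2) :
    b ≤ √K * c := by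
  calc b ≤ √(K * c ^ 2) := Real.le_sqrt_of_sq_le h
    _ = √K * c := by rw [Real.sqrt_mul' K (sq_nonneg c), Real.sqrt_sq hc]

namespace HasUpperRieszBound

variable [CompleteSpace E]

theorem summable_smul (hx : HasUpperRieszBound 𝕜 x K) (a : lp (fun _ : ι => 𝕜) 2) :
    Summable fun n => a n • x n := by
  have hK : Summable fun n => K * ‖a n‖ ^ 2 := (hasSum_norm_sq_lp_two a).summable.mul_left K
  rw [summable_iff_vanishing_norm] at hK ⊢
  intro δ hδ
  obtain ⟨s, hs⟩ := hK (δ ^ 2) (by positivity)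
  refine ⟨s, fun t hts => lt_of_pow_lt_pow_left₀ 2 hδ.le ?_⟩
  calc ‖∑ n ∈ t, a n • x n‖ ^ 2 ≤ K * ∑ n ∈ t, ‖a n‖ ^ 2 := hx t a
    _ = ∑ n ∈ t, K * ‖a n‖ ^ 2 := Finset.mul_sum ..
    _ ≤ ‖∑ n ∈ t, K * ‖a n‖ ^ 2‖ := Real.le_norm_self _
    _ < δ ^ 2 := hs t hts

theorem norm_tsum_smul_le (hx : HasUpperRieszBound 𝕜 x K) (a : lp (fun _ : ι => 𝕜) 2) :
    ‖∑' n, a n • x n‖ ≤ √K * ‖a‖ :=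
  le_sqrt_mul_of_sq_le_mul_sq (norm_nonneg a) <|
    le_of_tendsto_of_tendsto' ((hx.summable_smul a).hasSum.norm.pow 2)
      ((hasSum_norm_sq_lp_two a).const_mul K) fun s => hx s a

/-- The synthesis operator `a ↦ ∑' n, a n • x n` on `ℓ²` of a family with an upper Riesz bound. -/
noncomputable def synthesis (hx : HasUpperRieszBound 𝕜 x K) :
    lp (fun _ : ι => 𝕜) 2 →L[𝕜] E :=
  LinearMap.mkContinuous
    { toFun a := ∑' n, a n • x n
      map_add' a b := by
        simp only [lp.coeFn_add, Pi.add_apply, add_smul]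
        exact (hx.summable_smul a).tsum_add (hx.summable_smul b)
      map_smul' c a := by
        simp only [lp.coeFn_smul, Pi.smul_apply, smul_assoc]
        exact (hx.summable_smul a).tsum_const_smul c }
    √K hx.norm_tsum_smul_le

theorem hasSum_synthesis (hx : HasUpperRieszBound 𝕜 x K) (a : lp (fun _ : ι => 𝕜) 2) :
    HasSum (fun n => a n • x n) (hx.synthesis a) :=
  (hx.summable_smul a).hasSum

theorem synthesis_single [DecidableEq ι] (hx : HasUpperRieszBound 𝕜 x K) (n : ι) :
    hx.synthesis (lp.single 2 n 1) = x n := by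
  have h := hasSum_single (f := fun m => lp.single (E := fun _ : ι => 𝕜) 2 n 1 m • x m) n
    fun m hm => by simp [hm]
  simpa using (hx.hasSum_synthesis (lp.single 2 n 1)).unique h

theorem norm_le_norm_synthesis {L : ℝ} (hx : HasUpperRieszBound 𝕜 x K)
    (hlower : HasLowerRieszBound 𝕜 x L) (a : lp (fun _ : ι => 𝕜) 2) :
    ‖a‖ ≤ √L * ‖hx.synthesis a‖ :=
  le_sqrt_mul_of_sq_le_mul_sq (norm_nonneg _) <|
    le_of_tendsto_of_tendsto' (hasSum_norm_sq_lp_two a)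
      (((hx.hasSum_synthesis a).norm.pow 2).const_mul L) fun s => hlower s a

theorem antilipschitz_synthesis {L : ℝ} (hx : HasUpperRieszBound 𝕜 x K)
    (hlower : HasLowerRieszBound 𝕜 x L) : AntilipschitzWith (√L).toNNReal hx.synthesis :=
  hx.synthesis.antilipschitz_of_bound fun a => by
    simpa only [Real.coe_toNNReal _ (Real.sqrt_nonneg L)] using hx.norm_le_norm_synthesis hlower a

theorem range_synthesis_eq_top [CompleteSpace 𝕜] {L : ℝ} (hx : HasUpperRieszBound 𝕜 x K)
    (hlower : HasLowerRieszBound 𝕜 x L)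
    (hspan : (Submodule.span 𝕜 (Set.range x)).topologicalClosure = ⊤) :
    hx.synthesis.range = ⊤ := by
  classical
  have hclosed : IsClosed (Set.range hx.synthesis) :=
    (hx.antilipschitz_synthesis hlower).isClosed_range hx.synthesis.uniformContinuous
  have hsubset : Set.range x ⊆ hx.synthesis.range :=
    Set.range_subset_iff.2 fun n => ⟨lp.single 2 n 1, hx.synthesis_single n⟩
  rw [eq_top_iff, ← hspan]
  exact Submodule.topologicalClosure_minimal _ (Submodule.span_le.2 hsubset) hclosed

end HasUpperRieszBound

end Synthesis

section RieszBasis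

variable {ι 𝕜 E : Type*} [DecidableEq ι] [NontriviallyNormedField 𝕜] [NormedAddCommGroup E]
  [NormedSpace 𝕜 E]

variable (𝕜) in
/-- A family is a Riesz basis if an isomorphism from `ℓ²` onto the space maps the standard
orthonormal basis to it. -/
def IsRieszBasis (x : ι → E) : Prop :=
  ∃ T : lp (fun _ : ι => 𝕜) 2 ≃L[𝕜] E, ∀ n, T (lp.single 2 n 1) = x n

theorem isRieszBasis_of_rieszBounds [CompleteSpace 𝕜] [CompleteSpace E] {x : ι → E} {K L : ℝ}
    (hupper : HasUpperRieszBound 𝕜 x K) (hlower : HasLowerRieszBound 𝕜 x L)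
    (hspan : (Submodule.span 𝕜 (Set.range x)).topologicalClosure = ⊤) : IsRieszBasis 𝕜 x :=
  ⟨.ofBijective hupper.synthesis
      (LinearMap.ker_eq_bot.2 (hupper.antilipschitz_synthesis hlower).injective)
      (hupper.range_synthesis_eq_top hlower hspan),
    hupper.synthesis_single⟩

end RieszBasis

section Biorthogonal

variable {ι 𝕜 H : Type*} [RCLike 𝕜] [SeminormedAddCommGroup H] [InnerProductSpace 𝕜 H] {x y : ι → H}

theorem summable_norm_sub_sq_of_norm_le {ε : ι → ℝ} (hε : Summable ε) (hx : ∀ n, ‖x n‖ = 1)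
    (hy : ∀ n, ‖y n‖ ≤ 1 + ε n) (hyx : ∀ n, ⟪y n, x n⟫_𝕜 = 1) :
    Summable fun n => ‖x n - y n‖ ^ 2 := by
  have hdist (n : ι) : ‖x n - y n‖ ^ 2 ≤ ε n * (2 + ε n) :=
    calc ‖x n - y n‖ ^ 2 = ‖y n‖ ^ 2 - 1 := by
          rw [norm_sub_rev, norm_sub_sq (𝕜 := 𝕜), hyx, hx, RCLike.one_re]
          ring
      _ ≤ (1 + ε n) ^ 2 - 1 := by gcongr; exact hy n
      _ = ε n * (2 + ε n) := by ring
  have hbounded : (fun n => 2 + ε n) =O[cofinite] fun _ => (1 : ℝ) :=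
    (hε.tendsto_cofinite_zero.const_add 2).isBigO_one ℝ
  have hsummable : Summable fun n => ε n * (2 + ε n) :=
    summable_of_isBigO hε <| by simpa only [mul_one] using (isBigO_refl ε cofinite).mul hbounded
  exact hsummable.of_nonneg_of_le (fun n => sq_nonneg _) hdist

variable [DecidableEq ι]

variable (𝕜) in
/-- Biorthogonality of two families of vectors, the functionals being represented by `y` through
the inner product, which is linear in its second argument. -/
def IsBiorthogonal (y x : ι → H) : Prop :=
  ∀ m n, ⟪y m, x n⟫_𝕜 = if m = n then 1 else 0

namespace IsBiorthogonal

theorem symm (h : IsBiorthogonal 𝕜 y x) : IsBiorthogonal 𝕜 x y := fun m n => by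
  rw [← inner_conj_symm, h n m, apply_ite (starRingEnd 𝕜), map_one, map_zero]
  simp only [eq_comm]

theorem inner_sum_smul_sum_smul (h : IsBiorthogonal 𝕜 y x) (s : Finset ι) (a : ι → 𝕜) :
    ⟪∑ n ∈ s, a n • y n, ∑ n ∈ s, a n • x n⟫_𝕜 = ((∑ n ∈ s, ‖a n‖ ^ 2 : ℝ) : 𝕜) := by
  rw [sum_inner, RCLike.ofReal_sum]
  refine Finset.sum_congr rfl fun m hm => ?_
  simp [inner_sum, inner_smul_left, inner_smul_right, h m, hm, RCLike.mul_conj]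

theorem norm_sum_smul_sq_add_norm_sum_smul_sq (h : IsBiorthogonal 𝕜 y x) (s : Finset ι)
    (a : ι → 𝕜) :
    ‖∑ n ∈ s, a n • x n‖ ^ 2 + ‖∑ n ∈ s, a n • y n‖ ^ 2 =
      ‖∑ n ∈ s, a n • (x n - y n)‖ ^ 2 + 2 * ∑ n ∈ s, ‖a n‖ ^ 2 := by
  simp only [smul_sub, Finset.sum_sub_distrib]
  rw [norm_sub_sq (𝕜 := 𝕜), h.symm.inner_sum_smul_sum_smul, RCLike.ofReal_re]
  ring

theorem hasUpperRieszBound (h : IsBiorthogonal 𝕜 y x)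
    (hclose : Summable fun n => ‖x n - y n‖ ^ 2) :
    HasUpperRieszBound 𝕜 x (∑' n, ‖x n - y n‖ ^ 2 + 2) := fun s a => by
  have hdiff : ‖∑ n ∈ s, a n • (x n - y n)‖ ^ 2 ≤
      (∑ n ∈ s, ‖a n‖ ^ 2) * ∑' n, ‖x n - y n‖ ^ 2 :=
    (norm_sum_smul_sq_le s a _).trans <| by
      gcongr
      exact hclose.sum_le_tsum s fun n _ => sq_nonneg _
  linarith [h.norm_sum_smul_sq_add_norm_sum_smul_sq s a, sq_nonneg ‖∑ n ∈ s, a n • y n‖]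

theorem sum_norm_sq_le (h : IsBiorthogonal 𝕜 y x) (s : Finset ι) (a : ι → 𝕜) :
    ∑ n ∈ s, ‖a n‖ ^ 2 ≤ ‖∑ n ∈ s, a n • y n‖ * ‖∑ n ∈ s, a n • x n‖ := by
  simpa only [h.inner_sum_smul_sum_smul, RCLike.ofReal_re] using
    re_inner_le_norm (𝕜 := 𝕜) (∑ n ∈ s, a n • y n) (∑ n ∈ s, a n • x n)

theorem hasLowerRieszBound {K : ℝ} (h : IsBiorthogonal 𝕜 y x) (hy : HasUpperRieszBound 𝕜 y K) :
    HasLowerRieszBound 𝕜 x K := fun s a => by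
  set A := ∑ n ∈ s, ‖a n‖ ^ 2 with hA
  have hA0 : 0 ≤ A := by positivity
  rcases hA0.eq_or_lt with hzero | hpos
  · have ha : ∀ n ∈ s, a n = 0 := by
      simpa [hA, Finset.sum_eq_zero_iff_of_nonneg] using hzero.symm
    rw [← hzero, Finset.sum_eq_zero fun n hn => by rw [ha n hn, zero_smul]]
    simp
  · refine le_of_mul_le_mul_left ?_ hpos
    calc A * A ≤ (‖∑ n ∈ s, a n • y n‖ * ‖∑ n ∈ s, a n • x n‖) *
            (‖∑ n ∈ s, a n • y n‖ * ‖∑ n ∈ s, a n • x n‖) :=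
          mul_self_le_mul_self hA0 (h.sum_norm_sq_le s a)
      _ = ‖∑ n ∈ s, a n • y n‖ ^ 2 * ‖∑ n ∈ s, a n • x n‖ ^ 2 := by ring
      _ ≤ (K * A) * ‖∑ n ∈ s, a n • x n‖ ^ 2 := by gcongr; exact hy s a
      _ = A * (K * ‖∑ n ∈ s, a n • x n‖ ^ 2) := by ring

end IsBiorthogonal

end Biorthogonal

section HilbertSpace

variable {ι 𝕜 H : Type*} [DecidableEq ι] [RCLike 𝕜] [NormedAddCommGroup H] [InnerProductSpace 𝕜 H]
  [CompleteSpace H] {x : ι → H}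

theorem IsBiorthogonal.isRieszBasis {y : ι → H} (h : IsBiorthogonal 𝕜 y x)
    (hclose : Summable fun n => ‖x n - y n‖ ^ 2)
    (hspan : (Submodule.span 𝕜 (Set.range x)).topologicalClosure = ⊤) : IsRieszBasis 𝕜 x := by
  have hclose' : Summable fun n => ‖y n - x n‖ ^ 2 := by simpa only [norm_sub_rev] using hclose
  exact isRieszBasis_of_rieszBounds (h.hasUpperRieszBound hclose)
    (h.hasLowerRieszBound (h.symm.hasUpperRieszBound hclose')) hspan

theorem summable_eps_imp_bounded_Mbasis_equiv_ONB_general {ε : ι → ℝ} (hsum : Summable ε)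
    {xs : ι → H →L[𝕜] 𝕜} (hbi : ∀ m n, xs m (x n) = if m = n then 1 else 0)
    (hfund : (Submodule.span 𝕜 (Set.range x)).topologicalClosure = ⊤) (hnorm : ∀ n, ‖x n‖ = 1)
    (hbdd : ∀ n, ‖x n‖ * ‖xs n‖ ≤ 1 + ε n) : IsRieszBasis 𝕜 x := by
  let y (n : ι) : H := (InnerProductSpace.toDual 𝕜 H).symm (xs n)
  have hyx : IsBiorthogonal 𝕜 y x := fun m n => by
    rw [InnerProductSpace.toDual_symm_apply, hbi]
  have hy (n : ι) : ‖y n‖ ≤ 1 + ε n := by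
    simpa only [y, LinearIsometryEquiv.norm_map, hnorm, one_mul] using hbdd n
  have hdiag (n : ι) : ⟪y n, x n⟫_𝕜 = 1 := (hyx n n).trans (if_pos rfl)
  exact hyx.isRieszBasis (summable_norm_sub_sq_of_norm_le hsum hnorm hy hdiag) hfund

end HilbertSpace

/-- If `(ε n)` is nonnegative and summable, then every normalized
`(1+ε n)`-bounded Markushevich basis of the real Hilbert space `ℓ²` is equivalent to an
orthonormal basis: there is a bounded invertible linear operator `T` on `ℓ²` with
`T eₙ = xₙ` for the standard orthonormal basis `(eₙ)`. -/
theorem summable_eps_imp_bounded_Mbasis_equiv_ONB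
    (ε : ℕ → ℝ) (hε : ∀ n, 0 ≤ ε n) (hsum : Summable ε)
    (x : ℕ → lp (fun _ : ℕ => ℝ) 2)
    (xs : ℕ → (lp (fun _ : ℕ => ℝ) 2) →L[ℝ] ℝ)
    (hbi : ∀ m n, xs m (x n) = if m = n then 1 else 0)
    (hfund : (Submodule.span ℝ (Set.range x)).topologicalClosure = ⊤)
    (htotal : ∀ v : lp (fun _ : ℕ => ℝ) 2, (∀ n, xs n v = 0) → v = 0)
    (hnorm : ∀ n, ‖x n‖ = 1)
    (hbdd : ∀ n, ‖x n‖ * ‖xs n‖ ≤ 1 + ε n) :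
    ∃ T : (lp (fun _ : ℕ => ℝ) 2) ≃L[ℝ] (lp (fun _ : ℕ => ℝ) 2),
      ∀ n, T (lp.single 2 n 1) = x n := by
  exact summable_eps_imp_bounded_Mbasis_equiv_ONB_general hsum hbi hfund hnorm hbdd
end

section
/- Let (ε_n)_{n=1}^∞ be a sequence of nonnegative real numbers with Σ_{n=1}^∞ ε_n = ∞. Then there exists a (1+ε_n)-bounded M-basis {x_n, x_n*}_{n∈ℕ} of the real Hilbert space ℓ² which is not equivalent to an orthonormal basis of ℓ², i.e., there is no bounded invertible linear operator T on ℓ² with T e_n = x_n for all n, where (e_n) is the standard orthonormal basis. -/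
open scoped BigOperators

/-!
In each of a sequence of disjoint finite blocks of indices, stretch the orthonormal basis by a large
factor `t` along one vector spanned by the block. Together with the basis shrunk by the factor `t⁻¹`
along the same vectors this is a biorthogonal system. Along a vector of norm `t` whose coordinates
in its block are `√(ε j)`, the stretch increases the norm of the `j`-th basis vector at most to
`√(1 + ε j)`. Since `∑ ε j` diverges, the factors `t` can be made unbounded, and then no bounded
operator realizes the stretch, even after a normalization by bounded factors.
-/

open Submodule Finset

section MarkushevichBasis

variable {ι 𝕜 E : Type*} [DecidableEq ι] [NormedField 𝕜] [NormedAddCommGroup E] [NormedSpace 𝕜 E]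

/-- The pair `x`, `xs` is a Markushevich basis (M-basis): a biorthogonal system that is fundamental
and total. Any index type is allowed. -/
structure IsMarkushevichBasis (x : ι → E) (xs : ι → StrongDual 𝕜 E) : Prop where
  apply_eq_ite : ∀ m n, xs m (x n) = if m = n then 1 else 0
  fundamental : (span 𝕜 (Set.range x)).topologicalClosure = ⊤
  total : ∀ v, (∀ n, xs n v = 0) → v = 0

namespace IsMarkushevichBasis

variable {x : ι → E} {xs : ι → StrongDual 𝕜 E}

theorem ne_zero (h : IsMarkushevichBasis x xs) (n : ι) : x n ≠ 0 := fun h₀ => by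
  simpa [h₀] using h.apply_eq_ite n n

theorem inv_smul (h : IsMarkushevichBasis x xs) {a : ι → 𝕜} (ha : ∀ n, a n ≠ 0) :
    IsMarkushevichBasis (fun n => (a n)⁻¹ • x n) (fun n => a n • xs n) where
  apply_eq_ite m n := by
    rw [smul_apply, map_smul, h.apply_eq_ite]
    split_ifs with hmn
    · simp [hmn, ha n]
    · simp
  fundamental := by
    refine top_le_iff.1 (h.fundamental.ge.trans (topologicalClosure_mono (span_le.2 ?_)))
    rintro _ ⟨n, rfl⟩
    rw [SetLike.mem_coe, ← smul_inv_smul₀ (ha n) (x n)]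
    exact smul_mem _ _ (subset_span ⟨n, rfl⟩)
  total v hv := h.total v fun n => by simpa [ha n] using hv n

end IsMarkushevichBasis

end MarkushevichBasis

section InnerProductSpace

variable {𝕜 E : Type*} [RCLike 𝕜] [NormedAddCommGroup E] [InnerProductSpace 𝕜 E]

open scoped InnerProductSpace

theorem isMarkushevichBasis_innerSL {ι : Type*} [DecidableEq ι] {x y : ι → E}
    (hyx : ∀ m n, ⟪y m, x n⟫_𝕜 = if m = n then 1 else 0)
    (hx : (span 𝕜 (Set.range x)).topologicalClosure = ⊤)
    (hy : (span 𝕜 (Set.range y)).topologicalClosure = ⊤) :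
    IsMarkushevichBasis x (fun n => innerSL 𝕜 (y n)) where
  apply_eq_ite := hyx
  fundamental := hx
  total v hv := by
    have hspan : span 𝕜 (Set.range y) ⟂ span 𝕜 {v} := isOrtho_span.2 <| by
      rintro _ ⟨n, rfl⟩ _ rfl
      exact hv n
    exact (dense_iff_topologicalClosure_eq_top.2 hy).eq_zero_of_inner_right 𝕜
      fun w hw => hspan.inner_eq hw (mem_span_singleton_self v)

section Stretch

variable (K : Submodule 𝕜 E) [K.HasOrthogonalProjection]

/-- The operator that multiplies by `t` on `K` and is the identity on `Kᗮ`. -/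
noncomputable def stretch (t : 𝕜) : E →L[𝕜] E := 1 + (t - 1) • K.starProjection

theorem stretch_apply (t : 𝕜) (x : E) : stretch K t x = x + (t - 1) • K.starProjection x := rfl

variable {K} in
theorem stretch_apply_of_mem (t : 𝕜) {x : E} (hx : x ∈ K) : stretch K t x = t • x := by
  rw [stretch_apply, starProjection_eq_self_iff.2 hx, sub_smul, one_smul, add_sub_cancel]

theorem inner_stretch_stretch (s t : 𝕜) (x y : E) :
    ⟪stretch K s x, stretch K t y⟫_𝕜 =
      ⟪x, y⟫_𝕜 + (starRingEnd 𝕜 s * t - 1) * ⟪K.starProjection x, K.starProjection y⟫_𝕜 := by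
  have hxy : ⟪x, K.starProjection y⟫_𝕜 = ⟪K.starProjection x, K.starProjection y⟫_𝕜 := by
    rw [inner_starProjection_left_eq_right,
      starProjection_eq_self_iff.2 (starProjection_apply_mem K y)]
  have hyx : ⟪K.starProjection x, y⟫_𝕜 = ⟪K.starProjection x, K.starProjection y⟫_𝕜 := by
    rw [← hxy, inner_starProjection_left_eq_right]
  simp only [stretch_apply, inner_add_left, inner_add_right, inner_smul_left, inner_smul_right,
    hxy, hyx, map_sub, map_one]
  ring

theorem norm_sq_stretch (t : 𝕜) (x : E) :
    ‖stretch K t x‖ ^ 2 = ‖x‖ ^ 2 + (‖t‖ ^ 2 - 1) * ‖K.starProjection x‖ ^ 2 := by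
  have h := inner_stretch_stretch K t t x x
  simp only [inner_self_eq_norm_sq_to_K, RCLike.conj_mul] at h
  exact_mod_cast h

theorem norm_stretch_le_of_norm_le_one {t : 𝕜} (ht : ‖t‖ ≤ 1) (x : E) : ‖stretch K t x‖ ≤ ‖x‖ := by
  have ht' : ‖t‖ ^ 2 ≤ 1 := pow_le_one₀ (norm_nonneg t) ht
  refine le_of_sq_le_sq ?_ (norm_nonneg x)
  rw [norm_sq_stretch]
  nlinarith [sq_nonneg ‖K.starProjection x‖]

theorem norm_sq_stretch_span_singleton_le (v x : E) :
    ‖stretch (𝕜 ∙ v) (‖v‖ : 𝕜) x‖ ^ 2 ≤ ‖x‖ ^ 2 + ‖⟪v, x⟫_𝕜‖ ^ 2 := by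
  have hproj : ‖v‖ * ‖(𝕜 ∙ v).starProjection x‖ ≤ ‖⟪v, x⟫_𝕜‖ := by
    rcases eq_or_ne v 0 with rfl | hv
    · simp
    · rw [starProjection_singleton, norm_smul, norm_div, RCLike.norm_ofReal,
        abs_of_nonneg (by positivity)]
      have : ‖v‖ ≠ 0 := norm_ne_zero_iff.2 hv
      exact le_of_eq (by field_simp)
  have hproj_sq := pow_le_pow_left₀ (by positivity) hproj 2
  rw [norm_sq_stretch, RCLike.norm_ofReal, abs_norm]
  nlinarith [sq_nonneg ‖(𝕜 ∙ v).starProjection x‖]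

end Stretch

section Orthonormal

variable {ι : Type*} {b : ι → E}

theorem norm_sq_sum_smul_of_orthonormal (hb : Orthonormal 𝕜 b) (a : ι → 𝕜) (s : Finset ι) :
    ‖∑ j ∈ s, a j • b j‖ ^ 2 = ∑ j ∈ s, ‖a j‖ ^ 2 := by
  have h := hb.inner_sum a a s
  simp only [inner_self_eq_norm_sq_to_K, RCLike.conj_mul] at h
  exact_mod_cast h

theorem isOrtho_span_image_of_orthonormal (hb : Orthonormal 𝕜 b) {s t : Set ι}
    (hst : Disjoint s t) : span 𝕜 (b '' s) ⟂ span 𝕜 (b '' t) := isOrtho_span.2 <| by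
  rintro _ ⟨i, hi, rfl⟩ _ ⟨j, hj, rfl⟩
  exact hb.inner_eq_zero (hst.ne_of_mem hi hj)

theorem norm_map_le_of_orthonormal {F : Type*} [NormedAddCommGroup F] [NormedSpace 𝕜 F]
    (hb : Orthonormal 𝕜 b) {A : E →ₗ[𝕜] F} {T : E →L[𝕜] F} {a : ι → 𝕜} {C : ℝ} {s : Set ι}
    (ha : ∀ j ∈ s, ‖a j‖ ≤ C) (hA : ∀ j ∈ s, A (b j) = a j • T (b j))
    {v : E} (hv : v ∈ span 𝕜 (b '' s)) : ‖A v‖ ≤ ‖T‖ * (C * ‖v‖) := by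
  rcases s.eq_empty_or_nonempty with rfl | ⟨i, hi⟩
  · simp_all
  have hC : 0 ≤ C := (norm_nonneg _).trans (ha i hi)
  obtain ⟨l, hl, rfl⟩ := (Finsupp.mem_span_image_iff_linearCombination 𝕜).1 hv
  rw [Finsupp.linearCombination_apply, Finsupp.sum]
  have hmem : ∀ j ∈ l.support, j ∈ s := fun j hj => hl hj
  have hTA : A (∑ j ∈ l.support, l j • b j) = T (∑ j ∈ l.support, (a j * l j) • b j) := by
    simp only [map_sum, map_smul]
    refine sum_congr rfl fun j hj => ?_
    rw [hA j (hmem j hj), smul_smul, mul_comm]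
  have hnorm : ‖∑ j ∈ l.support, (a j * l j) • b j‖ ≤ C * ‖∑ j ∈ l.support, l j • b j‖ := by
    refine le_of_sq_le_sq ?_ (by positivity)
    rw [mul_pow, norm_sq_sum_smul_of_orthonormal hb, norm_sq_sum_smul_of_orthonormal hb, mul_sum]
    refine sum_le_sum fun j hj => ?_
    rw [norm_mul, mul_pow]
    gcongr
    exact ha j (hmem j hj)
  rw [hTA]
  exact T.le_opNorm_of_le hnorm

end Orthonormal

section BlockStretch

variable {ι κ : Type*}

/-- The family `b` with `b j` stretched by `t k` along the subspace `K k`, where `k = c j` is the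
block of the index `j`. -/
noncomputable def blockStretch (b : ι → E) (c : ι → κ) (K : κ → Submodule 𝕜 E)
    [∀ k, (K k).HasOrthogonalProjection] (t : κ → 𝕜) (j : ι) : E :=
  stretch (K (c j)) (t (c j)) (b j)

variable {b : ι → E} {c : ι → κ} {K : κ → Submodule 𝕜 E} [∀ k, (K k).HasOrthogonalProjection]
  {s t : κ → 𝕜}

theorem blockStretch_mem_span (hK : ∀ k, K k ≤ span 𝕜 (b '' (c ⁻¹' {k}))) (t : κ → 𝕜) (j : ι) :
    blockStretch b c K t j ∈ span 𝕜 (b '' (c ⁻¹' {c j})) :=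
  add_mem (subset_span ⟨j, rfl, rfl⟩) (smul_mem _ _ (hK _ (starProjection_apply_mem _ _)))

theorem inner_blockStretch_blockStretch [DecidableEq ι] (hb : Orthonormal 𝕜 b)
    (hK : ∀ k, K k ≤ span 𝕜 (b '' (c ⁻¹' {k}))) (hst : ∀ k, starRingEnd 𝕜 (s k) * t k = 1)
    (i j : ι) :
    ⟪blockStretch b c K s i, blockStretch b c K t j⟫_𝕜 = if i = j then 1 else 0 := by
  by_cases hij : c i = c j
  · simp only [blockStretch, hij, inner_stretch_stretch, hst, sub_self, zero_mul, add_zero,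
      orthonormal_iff_ite.1 hb]
  · rw [if_neg fun h => hij (congrArg c h)]
    have hdisj : Disjoint (c ⁻¹' {c i}) (c ⁻¹' {c j}) :=
      (Set.disjoint_singleton.2 hij).preimage c
    exact (isOrtho_span_image_of_orthonormal hb hdisj).inner_eq
      (blockStretch_mem_span hK s i) (blockStretch_mem_span hK t j)

theorem span_range_le_span_range_blockStretch (hK : ∀ k, K k ≤ span 𝕜 (b '' (c ⁻¹' {k})))
    (ht : ∀ k, t k ≠ 0) :
    span 𝕜 (Set.range b) ≤ span 𝕜 (Set.range (blockStretch b c K t)) := by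
  have hmap : ∀ k, span 𝕜 (b '' (c ⁻¹' {k})) ≤
      (span 𝕜 (Set.range (blockStretch b c K t))).comap (stretch (K k) (t k)).toLinearMap := by
    refine fun k => span_le.2 ?_
    rintro _ ⟨j, rfl, rfl⟩
    exact subset_span ⟨j, rfl⟩
  have hK_le : ∀ k, K k ≤ span 𝕜 (Set.range (blockStretch b c K t)) := fun k v hv => by
    have h := hmap k (hK k hv)
    rwa [mem_comap, ContinuousLinearMap.coe_coe, stretch_apply_of_mem _ hv,
      smul_mem_iff _ (ht k)] at h
  refine span_le.2 ?_
  rintro _ ⟨j, rfl⟩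
  have hj : blockStretch b c K t j ∈ span 𝕜 (Set.range (blockStretch b c K t)) :=
    subset_span ⟨j, rfl⟩
  exact (Submodule.add_mem_iff_left _ (smul_mem _ _ (hK_le _ (starProjection_apply_mem _ _)))).1 hj

theorem isMarkushevichBasis_blockStretch [DecidableEq ι] (hb : Orthonormal 𝕜 b)
    (hdense : (span 𝕜 (Set.range b)).topologicalClosure = ⊤)
    (hK : ∀ k, K k ≤ span 𝕜 (b '' (c ⁻¹' {k}))) (hst : ∀ k, starRingEnd 𝕜 (s k) * t k = 1) :
    IsMarkushevichBasis (blockStretch b c K t) (fun j => innerSL 𝕜 (blockStretch b c K s j)) := by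
  have hfund : ∀ {r : κ → 𝕜}, (∀ k, r k ≠ 0) →
      (span 𝕜 (Set.range (blockStretch b c K r))).topologicalClosure = ⊤ := fun hr =>
    top_le_iff.1 (hdense.ge.trans
      (topologicalClosure_mono (span_range_le_span_range_blockStretch hK hr)))
  have hne : ∀ k, starRingEnd 𝕜 (s k) * t k ≠ 0 := fun k => hst k ▸ one_ne_zero
  exact isMarkushevichBasis_innerSL (inner_blockStretch_blockStretch hb hK hst)
    (hfund fun k => right_ne_zero_of_mul (hne k))
    (hfund fun k => star_ne_zero.1 (left_ne_zero_of_mul (hne k)))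

theorem norm_le_of_map_eq_inv_smul_blockStretch (hb : Orthonormal 𝕜 b)
    (hK : ∀ k, K k ≤ span 𝕜 (b '' (c ⁻¹' {k}))) {a : ι → 𝕜} (ha : ∀ j, a j ≠ 0) {C : ℝ}
    (haC : ∀ j, ‖a j‖ ≤ C) {T : E →L[𝕜] E}
    (hT : ∀ j, T (b j) = (a j)⁻¹ • blockStretch b c K t j) {k : κ} (hk : K k ≠ ⊥) :
    ‖t k‖ ≤ ‖T‖ * C := by
  obtain ⟨v, hv, hv₀⟩ := (K k).exists_mem_ne_zero_of_ne_bot hk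
  refine le_of_mul_le_mul_right ?_ (norm_pos_iff.2 hv₀)
  calc ‖t k‖ * ‖v‖ = ‖stretch (K k) (t k) v‖ := by rw [stretch_apply_of_mem _ hv, norm_smul]
    _ ≤ ‖T‖ * (C * ‖v‖) := by
      refine norm_map_le_of_orthonormal (A := (stretch (K k) (t k)).toLinearMap) hb
        (fun j _ => haC j) ?_ (hK k hv)
      rintro j rfl
      rw [hT, smul_inv_smul₀ (ha j)]
      rfl
    _ = ‖T‖ * C * ‖v‖ := (mul_assoc _ _ _).symm

end BlockStretch

end InnerProductSpace

section Blocks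

open scoped InnerProductSpace

variable {ι : Type*} {δ : ι → ℝ}

theorem not_summable_min_one (hδ : ¬ Summable δ) : ¬ Summable fun j => min (δ j) 1 := by
  intro h
  refine hδ ((summable_congr_cofinite ?_).1 h)
  filter_upwards [h.tendsto_cofinite_zero.eventually_lt_const one_pos] with j hj
  exact min_eq_left ((min_lt_iff.1 hj).resolve_right (lt_irrefl 1)).le

theorem exists_disjoint_le_sum_of_not_summable (hδ₀ : ∀ j, 0 ≤ δ j) (hδ : ¬ Summable δ)
    (s : Finset ι) (C : ℝ) : ∃ F : Finset ι, Disjoint s F ∧ C ≤ ∑ j ∈ F, δ j := by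
  classical
  obtain ⟨u, hu⟩ : ∃ u : Finset ι, C + ∑ j ∈ s, δ j < ∑ j ∈ u, δ j := by
    by_contra! h
    exact hδ (summable_of_sum_le hδ₀ h)
  refine ⟨u \ s, disjoint_sdiff, ?_⟩
  have hle : ∑ j ∈ u, δ j ≤ ∑ j ∈ u \ s, δ j + ∑ j ∈ s, δ j := by
    rw [← sum_union sdiff_disjoint]
    exact sum_le_sum_of_subset_of_nonneg (by simp) fun j _ _ => hδ₀ j
  linarith

theorem exists_pairwise_disjoint_finsets_of_not_summable (hδ₀ : ∀ j, 0 ≤ δ j)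
    (hδ : ¬ Summable δ) :
    ∃ F : ℕ → Finset ι, Pairwise (Function.onFun Disjoint F) ∧
      ∀ k : ℕ, (k + 1 : ℝ) ≤ ∑ j ∈ F k, δ j := by
  classical
  obtain ⟨F, hF₁, hF⟩ := exists_seq_of_forall_finset_exists
    (fun s : Finset ι => 1 ≤ ∑ j ∈ s, δ j)
    (fun s s' => Disjoint s s' ∧ ∑ j ∈ s, δ j + 1 ≤ ∑ j ∈ s', δ j) fun S _ => by
      obtain ⟨F, hdisj, hsum⟩ := exists_disjoint_le_sum_of_not_summable hδ₀ hδ (S.biUnion id)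
        (∑ s ∈ S, ∑ j ∈ s, δ j + 1)
      have hnonneg : ∀ s : Finset ι, 0 ≤ ∑ j ∈ s, δ j := fun s => sum_nonneg fun j _ => hδ₀ j
      refine ⟨F, by linarith [sum_nonneg fun s (_ : s ∈ S) => hnonneg s], fun s hs =>
        ⟨hdisj.mono_left (subset_biUnion_of_mem id hs), ?_⟩⟩
      linarith [single_le_sum (fun s _ => hnonneg s) hs]
  refine ⟨F, (pairwise_disjoint_on F).2 fun m n hmn => (hF m n hmn).1, fun k => ?_⟩
  induction k with
  | zero => simpa using hF₁ 0
  | succ k ih =>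
    have := (hF k (k + 1) k.lt_succ_self).2
    push_cast
    linarith

theorem exists_forall_mem_imp_eq_of_pairwise_disjoint {κ : Type*} [Nonempty κ]
    {F : κ → Finset ι} (hF : Pairwise (Function.onFun Disjoint F)) :
    ∃ c : ι → κ, ∀ k, ∀ j ∈ F k, c j = k :=
  ⟨fun j => Classical.epsilon fun k => j ∈ F k, fun k _ hj =>
    have hmem := Classical.epsilon_spec (p := fun k => _ ∈ F k) ⟨k, hj⟩
    hF.eq (not_disjoint_iff.2 ⟨_, hmem, hj⟩)⟩

theorem exists_block_vectors_of_not_summable {𝕜 E : Type*} [RCLike 𝕜] [NormedAddCommGroup E]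
    [InnerProductSpace 𝕜 E] {b : ι → E} (hb : Orthonormal 𝕜 b) (hδ₀ : ∀ j, 0 ≤ δ j)
    (hδ : ¬ Summable δ) :
    ∃ (c : ι → ℕ) (f : ℕ → E), (∀ k, f k ∈ span 𝕜 (b '' (c ⁻¹' {k}))) ∧
      (∀ k : ℕ, (k + 1 : ℝ) ≤ ‖f k‖ ^ 2) ∧ ∀ j, ‖⟪f (c j), b j⟫_𝕜‖ ^ 2 ≤ δ j := by
  obtain ⟨F, hF, hsum⟩ := exists_pairwise_disjoint_finsets_of_not_summable hδ₀ hδ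
  obtain ⟨c, hc⟩ := exists_forall_mem_imp_eq_of_pairwise_disjoint hF
  have hsqrt : ∀ j, ‖(√(δ j) : 𝕜)‖ ^ 2 = δ j := fun j => by
    rw [RCLike.norm_ofReal, sq_abs, Real.sq_sqrt (hδ₀ j)]
  refine ⟨c, fun k => ∑ j ∈ F k, (√(δ j) : 𝕜) • b j, fun k => ?_, fun k => ?_, fun j => ?_⟩
  · exact sum_mem fun j hj => smul_mem _ _ (subset_span ⟨j, hc k j hj, rfl⟩)
  · rw [norm_sq_sum_smul_of_orthonormal hb]
    simpa only [hsqrt] using hsum k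
  · by_cases hj : j ∈ F (c j)
    · rw [hb.inner_left_sum _ hj, RCLike.norm_conj, hsqrt]
    · have hzero : ⟪∑ i ∈ F (c j), (√(δ i) : 𝕜) • b i, b j⟫_𝕜 = 0 := by
        rw [sum_inner]
        refine sum_eq_zero fun i hi => ?_
        rw [inner_smul_left, hb.inner_eq_zero (ne_of_mem_of_not_mem hi hj), mul_zero]
      simpa only [hzero, norm_zero, zero_pow two_ne_zero] using hδ₀ j

end Blocks

section HilbertBasis

variable {ι 𝕜 E : Type*} [DecidableEq ι] [RCLike 𝕜] [NormedAddCommGroup E] [InnerProductSpace 𝕜 E]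

theorem exists_isMarkushevichBasis_not_map_eq_inv_smul (b : HilbertBasis ι 𝕜 E) {δ : ι → ℝ}
    (hδ₀ : ∀ n, 0 ≤ δ n) (hδ : ¬ Summable δ) :
    ∃ (x : ι → E) (xs : ι → StrongDual 𝕜 E), IsMarkushevichBasis x xs ∧
      (∀ n, ‖x n‖ ^ 2 ≤ 1 + δ n) ∧ (∀ n, ‖xs n‖ ≤ 1) ∧
      ∀ (a : ι → 𝕜) (C : ℝ), (∀ n, a n ≠ 0) → (∀ n, ‖a n‖ ≤ C) →
        ¬ ∃ T : E →L[𝕜] E, ∀ n, T (b n) = (a n)⁻¹ • x n := by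
  obtain ⟨c, f, hf, hlarge, hsmall⟩ := exists_block_vectors_of_not_summable b.orthonormal hδ₀ hδ
  have hf_one : ∀ k, 1 ≤ ‖f k‖ := fun k =>
    (one_le_sq_iff₀ (norm_nonneg _)).1 (by linarith [hlarge k, k.cast_nonneg (α := ℝ)])
  have hf_pos : ∀ k, 0 < ‖f k‖ := fun k => one_pos.trans_le (hf_one k)
  have hK : ∀ k, 𝕜 ∙ f k ≤ span 𝕜 (b '' (c ⁻¹' {k})) := fun k =>
    (span_singleton_le_iff_mem _ _).2 (hf k)
  have hst : ∀ k, starRingEnd 𝕜 ((‖f k‖ : 𝕜)⁻¹) * (‖f k‖ : 𝕜) = 1 := fun k => by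
    rw [map_inv₀, RCLike.conj_ofReal, inv_mul_cancel₀ (RCLike.ofReal_ne_zero.2 (hf_pos k).ne')]
  have hs_le : ∀ k, ‖(‖f k‖ : 𝕜)⁻¹‖ ≤ 1 := fun k => by
    rw [norm_inv, RCLike.norm_ofReal, abs_norm]
    exact inv_le_one_of_one_le₀ (hf_one k)
  refine ⟨_, _, isMarkushevichBasis_blockStretch b.orthonormal
    b.dense_span hK hst, fun n => ?_, fun n => ?_, ?_⟩
  · refine (norm_sq_stretch_span_singleton_le (f (c n)) (b n)).trans ?_
    rw [b.orthonormal.norm_eq_one, one_pow]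
    exact add_le_add_right (hsmall n) 1
  · rw [innerSL_apply_norm, ← b.orthonormal.norm_eq_one n]
    exact norm_stretch_le_of_norm_le_one _ (hs_le _) _
  · rintro a C ha haC ⟨T, hT⟩
    have hbound : ∀ k, ‖f k‖ ≤ ‖T‖ * C := fun k => by
      have hne : 𝕜 ∙ f k ≠ ⊥ := mt span_singleton_eq_bot.1 (norm_pos_iff.1 (hf_pos k))
      simpa using norm_le_of_map_eq_inv_smul_blockStretch b.orthonormal hK ha haC hT hne
    obtain ⟨k, hk⟩ := exists_nat_gt ((‖T‖ * C) ^ 2)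
    linarith [hlarge k, pow_le_pow_left₀ (norm_nonneg _) (hbound k) 2]

-- Normalization carries the content: an unbounded rescaling of `b` is trivially no bounded image
-- of `b`.
theorem exists_bounded_Mbasis_not_equiv_ONB_general (b : HilbertBasis ι 𝕜 E)
    {ε : ι → ℝ} (hε : ∀ n, 0 ≤ ε n) (hdiv : ¬ Summable ε) :
    ∃ (x : ι → E) (xs : ι → StrongDual 𝕜 E), IsMarkushevichBasis x xs ∧
      (∀ n, ‖x n‖ = 1) ∧ (∀ n, ‖xs n‖ ≤ 1 + ε n) ∧ ¬ ∃ T : E →L[𝕜] E, ∀ n, T (b n) = x n := by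
  obtain ⟨x, xs, hx, hnorm, hxs, hT⟩ := exists_isMarkushevichBasis_not_map_eq_inv_smul b
    (fun n => le_min (hε n) zero_le_one) (not_summable_min_one hdiv)
  have hnorm_le : ∀ n, ‖x n‖ ≤ 1 + ε n := fun n => by
    refine le_of_sq_le_sq ?_ (by linarith [hε n])
    nlinarith [hnorm n, min_le_left (ε n) 1, hε n]
  have hnorm_le_two : ∀ n, ‖(‖x n‖ : 𝕜)‖ ≤ 2 := fun n => by
    rw [RCLike.norm_ofReal, abs_norm]
    exact le_of_sq_le_sq (by linarith [hnorm n, min_le_right (ε n) 1]) zero_le_two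
  have hne : ∀ n, (‖x n‖ : 𝕜) ≠ 0 := fun n =>
    RCLike.ofReal_ne_zero.2 (norm_ne_zero_iff.2 (hx.ne_zero n))
  refine ⟨_, _, hx.inv_smul hne, fun n => norm_smul_inv_norm (hx.ne_zero n), fun n => ?_,
    hT _ 2 hne hnorm_le_two⟩
  rw [norm_smul, RCLike.norm_ofReal, abs_norm]
  exact (mul_le_of_le_one_right (norm_nonneg _) (hxs n)).trans (hnorm_le n)

end HilbertBasis

/-- If `(ε n)` is nonnegative with `Σ ε n = ∞` (i.e. not summable), then
there is a `(1+ε n)`-bounded Markushevich basis of the real Hilbert space `ℓ²` that is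
not equivalent to an orthonormal basis: no bounded invertible linear operator `T` on `ℓ²`
maps the standard orthonormal basis to it. -/
theorem exists_bounded_Mbasis_not_equiv_ONB
    (ε : ℕ → ℝ) (hε : ∀ n, 0 ≤ ε n) (hdiv : ¬ Summable ε) :
    ∃ (x : ℕ → lp (fun _ : ℕ => ℝ) 2)
      (xs : ℕ → (lp (fun _ : ℕ => ℝ) 2) →L[ℝ] ℝ),
      (∀ m n, xs m (x n) = if m = n then 1 else 0) ∧
      (Submodule.span ℝ (Set.range x)).topologicalClosure = ⊤ ∧
      (∀ v : lp (fun _ : ℕ => ℝ) 2, (∀ n, xs n v = 0) → v = 0) ∧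
      (∀ n, ‖x n‖ * ‖xs n‖ ≤ 1 + ε n) ∧
      ¬ ∃ T : (lp (fun _ : ℕ => ℝ) 2) ≃L[ℝ] (lp (fun _ : ℕ => ℝ) 2),
          ∀ n, T (lp.single 2 n 1) = x n := by
  obtain ⟨x, xs, hx, hone, hle, hT⟩ := exists_bounded_Mbasis_not_equiv_ONB_general
    (HilbertBasis.ofRepr (.refl ℝ (lp (fun _ : ℕ => ℝ) 2))) hε hdiv
  exact ⟨x, xs, hx.apply_eq_ite, hx.fundamental, hx.total, fun n => by simpa [hone] using hle n,
    fun ⟨T, h⟩ => hT ⟨T, fun n => by rw [← h n, ← HilbertBasis.repr_symm_single]; rfl⟩⟩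
end

section
/- Let X be an infinite-dimensional separable real Banach space and let (ε_n)_{n=1}^∞ be a sequence of positive real numbers such that lim_{n→∞} n·ε_n = ∞ and Σ_{n=1}^∞ ε_n² = ∞. Then there exists a (1+ε_n)-bounded M-basis {x_n, x_n*}_{n∈ℕ} of X such that for every permutation σ of ℕ there is no constant C < ∞ with ‖Σ_{i≤m} a_i x_{σ(i)}‖ ≤ C‖Σ_{i≤n} a_i x_{σ(i)}‖ for all m ≤ n and all scalars a_1,…,a_n; in particular no permutation of this M-basis is equivalent to a Schauder basis of X. -/
open scoped BigOperators

/-!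
Enumerate a dense sequence in `X` and a norming sequence of functionals, and absorb one pair at a
time into a finite biorthogonal system, so that the limit system is fundamental and total. A
remainder `x₀`, with a functional `φ₀` satisfying `φ₀ x₀ = 1`, is spread over a block
`y i = a i • x₀ + u (q i)`, `ys i = a i • φ₀ + f (q i)`, where `∑ i, a i ^ 2 = 1`, `u` embeds a
Euclidean space almost isometrically and almost orthogonally to everything chosen before, `f`
represents the Euclidean inner product, and `q i = e i - a i • ∑ j, a j • e j`. Then
`∑ i, a i • y i = x₀`, while `‖y i‖ * ‖ys i‖ < 1 + ε i` as soon as `|a i|` is small compared with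
`ε i`; taking `a i` proportional to `ε i` on a long interval achieves this because `∑ ε i ^ 2`
diverges. A functional is absorbed by the same construction in the dual, whose functionals are
pulled back from the bidual by Helly's theorem.

With `x₀` scaled to be tiny, the full sum `∑ i, a i • y i` is tiny, but a sub-sum over `A` with
`s = ∑ i ∈ A, a i ^ 2` has norm at least about `√(s - s ^ 2)`. As each `a i` is small, every
ordering of the block passes through an `s` near `1 / 2`, so no ordering admits a uniform
partial-sum bound.

The embeddings `u` come from Dvoretzky's theorem, proved by sampling: a random combination of
Dvoretzky–Rogers vectors has small variance by the Efron–Stein inequality and large mean, hence,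
after rescaling, almost preserves the norm on a finite net.
-/

section EfronStein

open MeasureTheory ProbabilityTheory

section Product

variable {α β : Type*} [MeasurableSpace α] [MeasurableSpace β]
  {μ : Measure α} [IsProbabilityMeasure μ] {ν : Measure β} [IsProbabilityMeasure ν] {C : ℝ}

theorem memLp_of_abs_le {f : α → ℝ} (hf : Measurable f) (hC : ∀ x, |f x| ≤ C) (p : ENNReal) :
    MemLp f p μ :=
  .of_bound hf.aestronglyMeasurable C (.of_forall hC)

theorem integrable_of_abs_le {f : α → ℝ} (hf : Measurable f) (hC : ∀ x, |f x| ≤ C) :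
    Integrable f μ :=
  .of_bound hf.aestronglyMeasurable C (.of_forall hC)

theorem abs_integral_le_of_abs_le {f : α → ℝ} (hC : ∀ x, |f x| ≤ C) : |∫ x, f x ∂μ| ≤ C := by
  simpa using norm_integral_le_of_norm_le_const (μ := μ) (f := f) (.of_forall hC)

theorem abs_sq_le_of_abs_le {a : ℝ} (ha : |a| ≤ C) : |a ^ 2| ≤ C ^ 2 := by
  rw [abs_pow]
  gcongr

theorem measurable_integral_prod_right {F : α × β → ℝ} (hF : Measurable F) :
    Measurable fun x => ∫ y, F (x, y) ∂ν :=
  hF.stronglyMeasurable.integral_prod_right'.measurable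

theorem measurable_integral_prod_left {F : α × β → ℝ} (hF : Measurable F) :
    Measurable fun y => ∫ x, F (x, y) ∂μ :=
  hF.stronglyMeasurable.integral_prod_left'.measurable

theorem variance_eq_integral_sq_sub_sq_integral {f : α → ℝ} (hf : Measurable f)
    (hC : ∀ x, |f x| ≤ C) : Var[f; μ] = ∫ x, f x ^ 2 ∂μ - (∫ x, f x ∂μ) ^ 2 :=
  variance_eq_sub (memLp_of_abs_le hf hC 2)

theorem sq_integral_le_integral_sq {f : α → ℝ} (hf : Measurable f) (hC : ∀ x, |f x| ≤ C) :
    (∫ x, f x ∂μ) ^ 2 ≤ ∫ x, f x ^ 2 ∂μ := by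
  have := variance_nonneg f μ
  rw [variance_eq_integral_sq_sub_sq_integral hf hC] at this
  linarith

variable {F : α × β → ℝ}

theorem variance_prod_eq_add (hF : Measurable F) (hC : ∀ p, |F p| ≤ C) :
    Var[F; μ.prod ν] =
      ∫ x, Var[fun y => F (x, y); ν] ∂μ + Var[fun x => ∫ y, F (x, y) ∂ν; μ] := by
  have hF2 : Measurable fun p => F p ^ 2 := hF.pow_const 2
  have hmean := measurable_integral_prod_right (ν := ν) hF
  have hmean_le : ∀ x, |∫ y, F (x, y) ∂ν| ≤ C := fun x => abs_integral_le_of_abs_le fun y => hC _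
  have hsq_le : ∀ p, |F p ^ 2| ≤ C ^ 2 := fun p => abs_sq_le_of_abs_le (hC p)
  have hfiber : ∀ x, Var[fun y => F (x, y); ν] =
      ∫ y, F (x, y) ^ 2 ∂ν - (∫ y, F (x, y) ∂ν) ^ 2 := fun x =>
    variance_eq_integral_sq_sub_sq_integral (by fun_prop) fun y => hC _
  have hintegrable_sq := integrable_of_abs_le (μ := μ)
    (measurable_integral_prod_right (ν := ν) hF2) fun x =>
      abs_integral_le_of_abs_le fun y => hsq_le (x, y)
  simp_rw [hfiber]
  rw [variance_eq_integral_sq_sub_sq_integral hF hC,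
    variance_eq_integral_sq_sub_sq_integral hmean hmean_le,
    integral_prod _ (integrable_of_abs_le hF2 hsq_le),
    integral_prod _ (integrable_of_abs_le hF hC),
    integral_sub hintegrable_sq
      (integrable_of_abs_le (hmean.pow_const 2) fun x => abs_sq_le_of_abs_le (hmean_le x))]
  ring

theorem variance_integral_le (hF : Measurable F) (hC : ∀ p, |F p| ≤ C) :
    Var[fun x => ∫ y, F (x, y) ∂ν; μ] ≤ ∫ y, Var[fun x => F (x, y); μ] ∂ν := by
  set h : β → ℝ := fun y => ∫ x, F (x, y) ∂μ
  have hh : Measurable h := measurable_integral_prod_left hF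
  have hh_le : ∀ y, |h y| ≤ C := fun y => abs_integral_le_of_abs_le fun x => hC _
  have hD : Measurable fun p : α × β => F p - h p.2 := by fun_prop
  have hD_le : ∀ p : α × β, |F p - h p.2| ≤ C + C := fun p =>
    (abs_sub _ _).trans (add_le_add (hC p) (hh_le p.2))
  have hmean : ∫ x, ∫ y, F (x, y) ∂ν ∂μ = ∫ y, h y ∂ν :=
    integral_integral_swap (integrable_of_abs_le hF hC)
  have hcenter : ∀ x, ∫ y, F (x, y) ∂ν - ∫ y, h y ∂ν = ∫ y, (F (x, y) - h y) ∂ν := fun x =>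
    (integral_sub (integrable_of_abs_le (by fun_prop) fun y => hC (x, y))
      (integrable_of_abs_le hh hh_le)).symm
  have hDsq := integrable_of_abs_le (μ := μ.prod ν) (hD.pow_const 2) fun p =>
    abs_sq_le_of_abs_le (hD_le p)
  have hD_mean := measurable_integral_prod_right (ν := ν) hD
  calc Var[fun x => ∫ y, F (x, y) ∂ν; μ]
      = ∫ x, (∫ y, (F (x, y) - h y) ∂ν) ^ 2 ∂μ := by
        rw [variance_eq_integral (measurable_integral_prod_right hF).aemeasurable, hmean]
        simp_rw [hcenter]
    _ ≤ ∫ x, ∫ y, (F (x, y) - h y) ^ 2 ∂ν ∂μ :=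
        integral_mono
          (integrable_of_abs_le (hD_mean.pow_const 2) fun x =>
            abs_sq_le_of_abs_le (abs_integral_le_of_abs_le fun y => hD_le (x, y)))
          hDsq.integral_prod_left fun x =>
            sq_integral_le_integral_sq (by fun_prop) fun y => hD_le (x, y)
    _ = ∫ y, ∫ x, (F (x, y) - h y) ^ 2 ∂μ ∂ν := integral_integral_swap hDsq
    _ = ∫ y, Var[fun x => F (x, y); μ] ∂ν := by
        congr! 2 with y
        exact (variance_eq_integral (by fun_prop)).symm

theorem variance_prod_le (hF : Measurable F) (hC : ∀ p, |F p| ≤ C) :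
    Var[F; μ.prod ν] ≤
      ∫ x, Var[fun y => F (x, y); ν] ∂μ + ∫ y, Var[fun x => F (x, y); μ] ∂ν := by
  rw [variance_prod_eq_add hF hC]
  gcongr
  exact variance_integral_le hF hC

theorem integrable_variance_prod (hF : Measurable F) (hC : ∀ p, |F p| ≤ C) :
    Integrable (fun x => Var[fun y => F (x, y); ν]) μ := by
  have hF2 : Measurable fun p => F p ^ 2 := hF.pow_const 2
  simp_rw [fun x => variance_eq_integral_sq_sub_sq_integral (μ := ν) (f := fun y => F (x, y))
    (by fun_prop) fun y => hC (x, y)]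
  exact (integrable_of_abs_le (measurable_integral_prod_right hF2) fun x =>
      abs_integral_le_of_abs_le fun y => abs_sq_le_of_abs_le (hC (x, y))).sub
    (integrable_of_abs_le ((measurable_integral_prod_right hF).pow_const 2) fun x =>
      abs_sq_le_of_abs_le (abs_integral_le_of_abs_le fun y => hC (x, y)))

end Product

section Resampling

variable {α : Type*} [MeasurableSpace α] {μ : Measure α} [IsProbabilityMeasure μ] {C : ℝ}

theorem abs_sq_max_sub_le {a b : ℝ} (ha : |a| ≤ C) (hb : |b| ≤ C) :
    |max (a - b) 0 ^ 2| ≤ (2 * C) ^ 2 := by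
  refine abs_sq_le_of_abs_le ?_
  rw [abs_of_nonneg (le_max_right _ _)]
  exact max_le (by linarith [le_abs_self a, neg_abs_le b]) (by linarith [abs_nonneg a])

theorem variance_eq_integral_integral_sq_max {f : α → ℝ} (hf : Measurable f)
    (hC : ∀ x, |f x| ≤ C) :
    Var[f; μ] = ∫ x, ∫ y, max (f x - f y) 0 ^ 2 ∂μ ∂μ := by
  set D : α × α → ℝ := fun p => max (f p.1 - f p.2) 0 ^ 2
  have hD : Integrable D (μ.prod μ) :=
    integrable_of_abs_le (by fun_prop) fun p => abs_sq_max_sub_le (hC p.1) (hC p.2)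
  have hD_swap : Integrable (fun p => D p.swap) (μ.prod μ) := hD.swap
  have hsplit : ∀ p : α × α, (f p.1 - f p.2) ^ 2 = D p + D p.swap := by
    intro p
    rcases le_total (f p.1) (f p.2) with h | h <;> simp [D, h]
    ring
  have htwice : ∫ p, (f p.1 - f p.2) ^ 2 ∂(μ.prod μ) = 2 * ∫ p, D p ∂(μ.prod μ) := by
    simp_rw [hsplit]
    rw [integral_add hD hD_swap, integral_prod_swap, two_mul]
  have hf_int : Integrable f μ := integrable_of_abs_le hf hC
  have hmean : ∫ p : α × α, (f p.1 - f p.2) ∂(μ.prod μ) = 0 := by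
    rw [integral_sub (hf_int.comp_fst μ) (hf_int.comp_snd μ), integral_fun_fst, integral_fun_snd]
    simp
  have hvar : ∫ p, (f p.1 - f p.2) ^ 2 ∂(μ.prod μ) = 2 * Var[f; μ] := by
    have hf_memLp := memLp_of_abs_le (μ := μ) hf hC 2
    have hadd := variance_add_prod hf_memLp hf_memLp.neg
    simp only [Pi.neg_apply, ← sub_eq_add_neg, variance_neg] at hadd
    rw [← variance_of_integral_eq_zero (by fun_prop) hmean, hadd, two_mul]
  rw [← integral_prod D hD]
  linarith

variable {L : ℕ} {Ω : Fin L → Type*} [∀ i, MeasurableSpace (Ω i)]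
  {P : ∀ i, Measure (Ω i)} [∀ i, IsProbabilityMeasure (P i)] {F : (∀ i, Ω i) → ℝ}

theorem integrable_integral_sq_max_sub_update (hF : Measurable F) (hC : ∀ ξ, |F ξ| ≤ C)
    (i : Fin L) :
    Integrable (fun ξ => ∫ s, max (F ξ - F (Function.update ξ i s)) 0 ^ 2 ∂(P i))
      (Measure.pi P) := by
  have hD : Measurable fun p : (∀ i, Ω i) × Ω i =>
      max (F p.1 - F (Function.update p.1 i p.2)) 0 ^ 2 :=
    (((hF.comp measurable_fst).sub (hF.comp measurable_update')).max measurable_const).pow_const 2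
  exact integrable_of_abs_le (measurable_integral_prod_right hD) fun ξ =>
    abs_integral_le_of_abs_le fun s => abs_sq_max_sub_le (hC _) (hC _)

theorem measurePreserving_finCons {L : ℕ} {Ω : Fin (L + 1) → Type*}
    [∀ i, MeasurableSpace (Ω i)] (P : ∀ i, Measure (Ω i)) [∀ i, IsProbabilityMeasure (P i)] :
    MeasurePreserving (Fin.consEquiv Ω)
      ((P 0).prod (Measure.pi fun i => P i.succ)) (Measure.pi P) := by
  rw [← Fin.insertNthEquiv_zero]
  exact (measurePreserving_piFinSuccAbove P 0).symm

/-- The Efron–Stein inequality for bounded functions of independent variables. -/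
theorem variance_pi_le_sum (hF : Measurable F) (hC : ∀ ξ, |F ξ| ≤ C) :
    Var[F; Measure.pi P] ≤
      ∑ i, ∫ ξ, ∫ s, max (F ξ - F (Function.update ξ i s)) 0 ^ 2 ∂(P i) ∂(Measure.pi P) := by
  induction L with
  | zero =>
    have hconst : F = fun _ => F default := funext fun ξ => congrArg F (Subsingleton.elim _ _)
    rw [hconst]
    simp [variance_eq_integral]
  | succ L ih =>
    have hcons := measurePreserving_finCons P
    set ν := Measure.pi fun i : Fin L => P i.succ
    set G : Ω 0 × (∀ i : Fin L, Ω i.succ) → ℝ := fun p => F (Fin.cons p.1 p.2)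
    have hG : Measurable G := hF.comp hcons.measurable
    have hG_le : ∀ p, |G p| ≤ C := fun p => hC _
    set D : Fin (L + 1) → (∀ i, Ω i) → ℝ := fun i ξ =>
      ∫ s, max (F ξ - F (Function.update ξ i s)) 0 ^ 2 ∂(P i)
    have hD_int (i) := integrable_integral_sq_max_sub_update (P := P) hF hC i
    have hD (i) : Integrable (fun p : Ω 0 × (∀ i : Fin L, Ω i.succ) => D i (Fin.cons p.1 p.2))
        ((P 0).prod ν) :=
      hcons.integrable_comp_of_integrable (hD_int i)
    have hD_integral (i) : ∫ ξ, D i ξ ∂(Measure.pi P) =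
        ∫ p : Ω 0 × (∀ i : Fin L, Ω i.succ), D i (Fin.cons p.1 p.2) ∂((P 0).prod ν) := by
      rw [← hcons.map_eq] at hD_int ⊢
      exact integral_map hcons.aemeasurable (hD_int i).aestronglyMeasurable
    have hzero : ∫ y, Var[fun x => G (x, y); P 0] ∂ν = ∫ ξ, D 0 ξ ∂(Measure.pi P) := by
      rw [hD_integral, integral_prod_symm _ (hD 0)]
      congr! 2 with y
      rw [variance_eq_integral_integral_sq_max (by fun_prop) fun x => hG_le (x, y)]
      simp [D, G]
    have hsucc : ∫ x, Var[fun y => G (x, y); ν] ∂(P 0) ≤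
        ∑ i : Fin L, ∫ ξ, D i.succ ξ ∂(Measure.pi P) := by
      have hD_fst (i : Fin L) := (hD i.succ).integral_prod_left
      simp_rw [hD_integral, fun i : Fin L => integral_prod _ (hD i.succ)]
      rw [← integral_finsetSum _ fun i _ => hD_fst i]
      refine integral_mono (integrable_variance_prod hG hG_le)
        (integrable_finsetSum _ fun i _ => hD_fst i) fun x => ?_
      simpa [D, G] using ih (F := fun y => G (x, y)) (by fun_prop) fun y => hG_le (x, y)
    calc Var[F; Measure.pi P] = Var[G; (P 0).prod ν] :=
          (hcons.variance_fun_comp hF.aemeasurable).symm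
      _ ≤ _ := (variance_prod_le hG hG_le).trans (add_le_add hsucc hzero.le)
      _ = _ := by rw [add_comm, Fin.sum_univ_succ]

theorem variance_pi_le_of_sum_sq_max_sub_update_le {B : ℝ} (hF : Measurable F)
    (hC : ∀ ξ, |F ξ| ≤ C)
    (hB : ∀ ξ s : ∀ i, Ω i, ∑ i, max (F ξ - F (Function.update ξ i (s i))) 0 ^ 2 ≤ B) :
    Var[F; Measure.pi P] ≤ B := by
  set D : ∀ i, (∀ i, Ω i) → Ω i → ℝ := fun i ξ s => max (F ξ - F (Function.update ξ i s)) 0 ^ 2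
  have hD (i) (ξ : ∀ i, Ω i) : Measurable (D i ξ) := by
    have : Measurable fun s => F (Function.update ξ i s) := hF.comp (measurable_update ξ)
    fun_prop
  have hD_int (i) (ξ : ∀ i, Ω i) : Integrable (fun s : ∀ i, Ω i => D i ξ (s i)) (Measure.pi P) :=
    integrable_of_abs_le ((hD i ξ).comp (measurable_pi_apply i)) fun s =>
      abs_sq_max_sub_le (hC _) (hC _)
  have hsum (ξ : ∀ i, Ω i) : ∑ i, ∫ s, D i ξ s ∂(P i) ≤ B := by
    have heval (i) : ∫ s, D i ξ s ∂(P i) = ∫ s, D i ξ (s i) ∂(Measure.pi P) :=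
      (integral_comp_eval (hD i ξ).aestronglyMeasurable).symm
    simp_rw [heval]
    rw [← integral_finsetSum _ fun i _ => hD_int i ξ]
    simpa using integral_mono (integrable_finsetSum _ fun i _ => hD_int i ξ)
      (integrable_const B) (hB ξ)
  calc Var[F; Measure.pi P] ≤ ∫ ξ, ∑ i, ∫ s, D i ξ s ∂(P i) ∂(Measure.pi P) := by
        rw [integral_finsetSum _ fun i _ => integrable_integral_sq_max_sub_update hF hC i]
        exact variance_pi_le_sum hF hC
    _ ≤ ∫ _, B ∂(Measure.pi P) := integral_mono
        (integrable_finsetSum _ fun i _ => integrable_integral_sq_max_sub_update hF hC i)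
        (integrable_const B) hsum
    _ = B := by simp

theorem measureReal_pi_abs_sub_integral_ge_le {B c : ℝ} (hF : Measurable F)
    (hC : ∀ ξ, |F ξ| ≤ C)
    (hB : ∀ ξ s : ∀ i, Ω i, ∑ i, max (F ξ - F (Function.update ξ i (s i))) 0 ^ 2 ≤ B)
    (hc : 0 < c) :
    (Measure.pi P).real {ξ | c ≤ |F ξ - ∫ ξ, F ξ ∂(Measure.pi P)|} ≤ B / c ^ 2 := by
  have hvar := variance_pi_le_of_sum_sq_max_sub_update_le (P := P) hF hC hB
  have hB_nonneg : 0 ≤ B := (variance_nonneg F (Measure.pi P)).trans hvar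
  refine ENNReal.toReal_le_of_le_ofReal (by positivity)
    ((meas_ge_le_variance_div_sq (memLp_of_abs_le hF hC 2) hc).trans ?_)
  gcongr

end Resampling

end EfronStein

section DvoretzkyRogers

open Module

variable {V Y ι : Type*} [NormedAddCommGroup Y] [NormedSpace ℝ Y]

section MaximalVolume

variable [NormedAddCommGroup V]

/-- A contraction `u` from a finite-dimensional space, the image of whose unit ball has maximal
volume among the images `u (D B)` contained in the unit ball. For Euclidean `V` this is the map
defining the John ellipsoid of the range of `u`. -/
structure IsMaximalVolumeContraction [NormedSpace ℝ V] (u : V →ₗ[ℝ] Y) : Prop where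
  norm_apply_le : ∀ t, ‖u t‖ ≤ ‖t‖
  abs_det_le_one : ∀ D : V →ₗ[ℝ] V, (∀ t, ‖u (D t)‖ ≤ ‖t‖) → |LinearMap.det D| ≤ 1

section NormedSpace

variable [NormedSpace ℝ V]

theorem IsMaximalVolumeContraction.abs_det_le_pow {u : V →ₗ[ℝ] Y}
    (hu : IsMaximalVolumeContraction u) {D : V →ₗ[ℝ] V} {r : ℝ} (hr : 0 < r)
    (hD : ∀ t, ‖u (D t)‖ ≤ r * ‖t‖) : |LinearMap.det D| ≤ r ^ finrank ℝ V := by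
  have h := hu.abs_det_le_one (r⁻¹ • D) fun t => by
    rw [LinearMap.smul_apply, map_smul, norm_smul, norm_inv, Real.norm_of_nonneg hr.le,
      inv_mul_le_iff₀ hr]
    exact hD t
  rwa [LinearMap.det_smul, abs_mul, inv_pow, abs_of_pos (by positivity),
    inv_mul_le_iff₀ (by positivity), mul_one] at h

variable [FiniteDimensional ℝ V]

theorem isCompact_setOf_forall_norm_comp_apply_le {φ : V →L[ℝ] Y} (hφ : Function.Injective φ) :
    IsCompact {M : V →L[ℝ] V | ∀ t, ‖φ (M t)‖ ≤ ‖t‖} := by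
  obtain ⟨k, -, hk⟩ :=
    LinearMap.exists_antilipschitzWith (φ : V →ₗ[ℝ] Y) (LinearMap.ker_eq_bot.2 hφ)
  have : ProperSpace (V →L[ℝ] V) := FiniteDimensional.proper ℝ _
  refine Metric.isCompact_of_isClosed_isBounded ?_ ?_
  · simp only [Set.ofPred_forall]
    exact isClosed_iInter fun t => isClosed_le (by fun_prop) continuous_const
  · refine (Metric.isBounded_closedBall (x := 0) (r := k)).subset fun M hM => ?_
    rw [mem_closedBall_zero_iff]
    refine M.opNorm_le_bound k.2 fun t => (ZeroHomClass.bound_of_antilipschitz φ hk (M t)).trans ?_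
    gcongr
    exact hM t

theorem exists_isMaximalVolumeContraction_comp {φ : V →L[ℝ] Y} (hφ : Function.Injective φ) :
    ∃ M : V →L[ℝ] V, IsMaximalVolumeContraction (φ ∘L M : V →ₗ[ℝ] Y) := by
  set K : Set (V →L[ℝ] V) := {M | ∀ t, ‖φ (M t)‖ ≤ ‖t‖}
  set c : ℝ := (‖φ‖ + 1)⁻¹
  have hc : 0 < c := by positivity
  have hc_mem : c • ContinuousLinearMap.id ℝ V ∈ K := by
    intro t
    have hφt : ‖φ t‖ ≤ (‖φ‖ + 1) * ‖t‖ :=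
      (φ.le_opNorm t).trans (by gcongr; linarith)
    rw [← inv_mul_le_iff₀ (by positivity)] at hφt
    simpa [norm_smul, abs_of_pos hc] using hφt
  obtain ⟨M, hM, hmax⟩ := (isCompact_setOf_forall_norm_comp_apply_le hφ).exists_isMaxOn
    (f := fun M : V →L[ℝ] V => |M.det|) ⟨_, hc_mem⟩
    ContinuousLinearMap.continuous_det.abs.continuousOn
  have hdet_pos : 0 < |M.det| := by
    refine lt_of_lt_of_le ?_ (hmax hc_mem)
    change 0 < |LinearMap.det (c • (LinearMap.id : V →ₗ[ℝ] V))|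
    simp [hc.ne']
  refine ⟨M, hM, fun D hD => ?_⟩
  have hcomp : |LinearMap.det ((M : V →ₗ[ℝ] V) ∘ₗ D)| ≤ |M.det| :=
    hmax (show M ∘L D.toContinuousLinearMap ∈ K from hD)
  rw [LinearMap.det_comp, abs_mul] at hcomp
  exact le_of_mul_le_mul_left (by simpa using hcomp) hdet_pos

end NormedSpace

section InnerProductSpace

variable [InnerProductSpace ℝ V] [FiniteDimensional ℝ V]

theorem det_id_add_smul_starProjection (K : Submodule ℝ V) (s : ℝ) :
    LinearMap.det (LinearMap.id + s • (K.starProjection : V →ₗ[ℝ] V)) =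
      (1 + s) ^ finrank ℝ K := by
  let e := K.prodEquivOfIsCompl _ K.isCompl_orthogonal
  have hconj : (e.symm : V →ₗ[ℝ] K × Kᗮ) ∘ₗ (LinearMap.id + s • (K.starProjection : V →ₗ[ℝ] V)) ∘ₗ
      (e.symm.symm : K × Kᗮ →ₗ[ℝ] V) =
      LinearMap.prodMap ((1 + s) • LinearMap.id) LinearMap.id := by
    refine LinearMap.ext fun ⟨p, q⟩ => e.injective ?_
    have hp : K.starProjection (p : V) = p := Submodule.starProjection_eq_self_iff.2 p.2
    have hq : K.starProjection (q : V) = 0 := K.starProjection_apply_eq_zero_iff.2 q.2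
    simp [e, hp, hq, add_smul]
  rw [← LinearMap.det_conj _ e.symm, hconj, LinearMap.det_prodMap, LinearMap.det_smul]
  simp

/-- Both sides agree at `s = 0`, so the derivatives there compare. -/
theorem le_mul_of_forall_one_add_pow_le {k n : ℕ} {κ : ℝ}
    (h : ∀ s : ℝ, 0 < s → (1 + s) ^ k ≤ (1 + s * κ) ^ n) : (k : ℝ) ≤ n * κ := by
  have hderiv : HasDerivAt (fun s : ℝ => (1 + s * κ) ^ n - (1 + s) ^ k) (n * κ - k) 0 := by
    have hright := (((hasDerivAt_id (0 : ℝ)).mul_const κ).const_add 1).pow n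
    have hleft := ((hasDerivAt_id (0 : ℝ)).const_add 1).pow k
    simpa [Pi.sub_def, Pi.pow_def] using hright.sub hleft
  have hslope : 0 ≤ n * κ - k := by
    refine ge_of_tendsto hderiv.tendsto_slope_zero_right ?_
    filter_upwards [self_mem_nhdsWithin] with s hs
    have := h s hs
    simpa using mul_nonneg (inv_nonneg.2 (le_of_lt hs)) (sub_nonneg.2 this)
  linarith

theorem IsMaximalVolumeContraction.finrank_le_of_norm_le {u : V →ₗ[ℝ] Y}
    (hu : IsMaximalVolumeContraction u) {κ : ℝ} (hκ : 0 ≤ κ) {K : Submodule ℝ V}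
    (hK : ∀ x ∈ K, ‖u x‖ ≤ κ * ‖x‖) : (finrank ℝ K : ℝ) ≤ finrank ℝ V * κ := by
  refine le_mul_of_forall_one_add_pow_le fun s hs => ?_
  set D : V →ₗ[ℝ] V := LinearMap.id + s • (K.starProjection : V →ₗ[ℝ] V)
  have hstretch (t : V) : ‖u (D t)‖ ≤ (1 + s * κ) * ‖t‖ :=
    calc ‖u (D t)‖ = ‖u t + s • u (K.starProjection t)‖ := by simp [D]
      _ ≤ ‖u t‖ + s * ‖u (K.starProjection t)‖ := by
          simpa only [norm_smul, Real.norm_of_nonneg hs.le] using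
            norm_add_le (u t) (s • u (K.starProjection t))
      _ ≤ ‖t‖ + s * (κ * ‖t‖) := by
          gcongr
          · exact hu.norm_apply_le t
          · exact (hK _ (K.starProjection_apply_mem t)).trans
              (by gcongr; exact K.norm_starProjection_apply_le t)
      _ = (1 + s * κ) * ‖t‖ := by ring
  have hdet := hu.abs_det_le_pow (by positivity) hstretch
  rwa [det_id_add_smul_starProjection, abs_of_pos (by positivity)] at hdet

theorem IsMaximalVolumeContraction.exists_mem_orthogonal_norm_ge {u : V →ₗ[ℝ] Y}
    (hu : IsMaximalVolumeContraction u) {δ : ℝ} (hδ : δ ≤ 1) {S : Submodule ℝ V}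
    (hS : finrank ℝ S < finrank ℝ V * δ) : ∃ x ∈ Sᗮ, ‖x‖ = 1 ∧ 1 - δ ≤ ‖u x‖ := by
  obtain ⟨x, hxS, hx⟩ : ∃ x ∈ Sᗮ, (1 - δ) * ‖x‖ < ‖u x‖ := by
    by_contra! hcon
    have hrank := hu.finrank_le_of_norm_le (by linarith) hcon
    have hadd : (finrank ℝ S + finrank ℝ Sᗮ : ℝ) = finrank ℝ V := by
      exact_mod_cast S.finrank_add_finrank_orthogonal
    linarith
  have hx_pos : 0 < ‖x‖ := norm_pos_iff.2 (by rintro rfl; simp at hx)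
  refine ⟨‖x‖⁻¹ • x, Sᗮ.smul_mem _ hxS, by simp [norm_smul, hx_pos.ne'], ?_⟩
  rw [map_smul, norm_smul, norm_inv, norm_norm, le_inv_mul_iff₀ hx_pos]
  linarith

theorem IsMaximalVolumeContraction.exists_orthonormal_norm_ge {u : V →ₗ[ℝ] Y}
    (hu : IsMaximalVolumeContraction u) {δ : ℝ} (hδ : δ ≤ 1) {N : ℕ}
    (hN : N < finrank ℝ V * δ) :
    ∃ e : Fin N → V, Orthonormal ℝ e ∧ ∀ i, 1 - δ ≤ ‖u (e i)‖ := by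
  induction N with
  | zero => exact ⟨Fin.elim0, by simp, fun i => i.elim0⟩
  | succ N ih =>
    push_cast at hN
    obtain ⟨e, he, hue⟩ := ih (by linarith)
    obtain ⟨x, hxS, hx, hux⟩ := hu.exists_mem_orthogonal_norm_ge hδ
      (S := Submodule.span ℝ (Set.range e)) (by
        rw [finrank_span_eq_card he.linearIndependent, Fintype.card_fin]
        linarith)
    have hxe (i) : inner ℝ x (e i) = 0 :=
      (Submodule.mem_orthogonal' _ _).1 hxS _ (Submodule.subset_span ⟨i, rfl⟩)
    exact ⟨Matrix.vecCons x e, orthonormal_vecCons_iff.2 ⟨hx, hxe, he⟩, Fin.cases hux hue⟩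

end InnerProductSpace

end MaximalVolume

section UpperEstimate

variable [Fintype ι]

/-- The upper `ℓ₂` estimate with constant one: `c ↦ ∑ i, c i • w i` is a contraction from `ℓ₂`. -/
def HasUpperTwoEstimate (w : ι → Y) : Prop :=
  ∀ c : ι → ℝ, ‖∑ i, c i • w i‖ ^ 2 ≤ ∑ i, c i ^ 2

theorem hasUpperTwoEstimate_of_orthonormal [NormedAddCommGroup V] [InnerProductSpace ℝ V]
    {e : ι → V} (he : Orthonormal ℝ e) {u : V →ₗ[ℝ] Y} (hu : ∀ t, ‖u t‖ ≤ ‖t‖) :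
    HasUpperTwoEstimate fun i => u (e i) := by
  intro c
  calc ‖∑ i, c i • u (e i)‖ ^ 2 = ‖u (∑ i, c i • e i)‖ ^ 2 := by simp
    _ ≤ ‖∑ i, c i • e i‖ ^ 2 := by gcongr; exact hu _
    _ = ∑ i, c i ^ 2 := by rw [← real_inner_self_eq_norm_sq, he.inner_sum]; simp [pow_two]

variable {w : ι → Y} {g : Y →L[ℝ] ℝ} {δ : ℝ}

theorem HasUpperTwoEstimate.sum_sq_apply_le_one (hw : HasUpperTwoEstimate w) (hg : ‖g‖ ≤ 1) :
    ∑ i, g (w i) ^ 2 ≤ 1 := by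
  set S := ∑ i, g (w i) ^ 2
  have hS : S ≤ ‖∑ i, g (w i) • w i‖ :=
    calc S = g (∑ i, g (w i) • w i) := by simp [S, pow_two]
      _ ≤ ‖g (∑ i, g (w i) • w i)‖ := le_abs_self _
      _ ≤ ‖∑ i, g (w i) • w i‖ := (g.le_of_opNorm_le hg _).trans_eq (one_mul _)
  have hsq := hw fun i => g (w i)
  nlinarith [norm_nonneg (∑ i, g (w i) • w i)]

theorem HasUpperTwoEstimate.sum_abs_apply_le [DecidableEq ι] (hw : HasUpperTwoEstimate w)
    (hδ : 32 * (Fintype.card ι * δ) ≤ 1) {k : ι} (hk : 1 - δ ≤ ‖w k‖) (hg : ‖g‖ ≤ 1)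
    (hgk : g (w k) = ‖w k‖) : ∑ j ∈ Finset.univ.erase k, |g (w j)| ≤ 1 / 4 := by
  have hsum := hw.sum_sq_apply_le_one hg
  rw [← Finset.add_sum_erase _ _ (Finset.mem_univ k), hgk] at hsum
  set s := Finset.univ.erase k
  have hrest : ∑ j ∈ s, g (w j) ^ 2 ≤ 2 * δ := by nlinarith [sq_nonneg (‖w k‖ - 1)]
  have hcard : (s.card : ℝ) ≤ Fintype.card ι := by exact_mod_cast s.card_le_univ
  have hcauchy := sq_sum_le_card_mul_sum_sq (s := s) (f := fun j => |g (w j)|)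
  simp only [sq_abs] at hcauchy
  have hsq : (∑ j ∈ s, |g (w j)|) ^ 2 ≤ (1 / 4) ^ 2 :=
    calc _ ≤ (s.card : ℝ) * ∑ j ∈ s, g (w j) ^ 2 := hcauchy
      _ ≤ Fintype.card ι * (2 * δ) := by gcongr
      _ ≤ (1 / 4) ^ 2 := by linarith
  exact le_of_sq_le_sq hsq (by norm_num)

theorem HasUpperTwoEstimate.abs_le_two_mul_norm_sum (hw : HasUpperTwoEstimate w)
    (hδ : 32 * (Fintype.card ι * δ) ≤ 1) (hwδ : ∀ i, 1 - δ ≤ ‖w i‖) (c : ι → ℝ) (i : ι) :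
    |c i| ≤ 2 * ‖∑ j, c j • w j‖ := by
  classical
  obtain ⟨k, -, hk⟩ := Finset.exists_max_image Finset.univ (fun i => |c i|) ⟨i, Finset.mem_univ i⟩
  refine (hk i (Finset.mem_univ i)).trans ?_
  obtain ⟨g, hg, hgk⟩ := exists_dual_vector'' ℝ (w k)
  replace hgk : g (w k) = ‖w k‖ := hgk
  set s := Finset.univ.erase k
  have hoff : |∑ j ∈ s, c j * g (w j)| ≤ |c k| * (1 / 4) :=
    calc _ ≤ ∑ j ∈ s, |c j| * |g (w j)| := by
          simpa only [abs_mul] using Finset.abs_sum_le_sum_abs (fun j => c j * g (w j)) s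
      _ ≤ ∑ j ∈ s, |c k| * |g (w j)| := Finset.sum_le_sum fun j _ =>
          mul_le_mul_of_nonneg_right (hk j (Finset.mem_univ j)) (abs_nonneg _)
      _ ≤ |c k| * (1 / 4) := by
          rw [← Finset.mul_sum]
          gcongr
          exact hw.sum_abs_apply_le hδ (hwδ k) hg hgk
  have hsplit : g (∑ j, c j • w j) = c k * ‖w k‖ + ∑ j ∈ s, c j * g (w j) := by
    rw [map_sum, ← Finset.add_sum_erase _ _ (Finset.mem_univ k)]
    simp [hgk, s]
  have hdiag : |c k| * ‖w k‖ ≤ ‖∑ j, c j • w j‖ + |c k| * (1 / 4) :=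
    calc |c k| * ‖w k‖ = |g (∑ j, c j • w j) - ∑ j ∈ s, c j * g (w j)| := by
          rw [hsplit, add_sub_cancel_right, abs_mul, abs_norm]
      _ ≤ |g (∑ j, c j • w j)| + |∑ j ∈ s, c j * g (w j)| := abs_sub _ _
      _ ≤ _ := add_le_add ((g.le_of_opNorm_le hg _).trans_eq (one_mul _)) hoff
  have hwk : 3 / 4 ≤ ‖w k‖ := by
    have hcard : (1 : ℝ) ≤ Fintype.card ι := by exact_mod_cast Fintype.card_pos_iff.2 ⟨k⟩
    nlinarith [hwδ k]
  nlinarith [abs_nonneg (c k)]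

end UpperEstimate

theorem exists_injective_euclideanSpace (hY : ¬ FiniteDimensional ℝ Y) (n : ℕ) :
    ∃ φ : EuclideanSpace ℝ (Fin n) →L[ℝ] Y, Function.Injective φ := by
  obtain ⟨w, hw⟩ : ∃ w : Fin n → Y, LinearIndependent ℝ w := by
    apply exists_linearIndependent_of_le_rank
    rw [FiniteDimensional, ← rank_lt_aleph0_iff, not_lt] at hY
    exact Cardinal.natCast_le_aleph0.trans hY
  let b : Basis (Fin n) ℝ (EuclideanSpace ℝ (Fin n)) := (EuclideanSpace.basisFun (Fin n) ℝ).toBasis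
  exact ⟨(b.constr ℝ w).toContinuousLinearMap, b.injective_constr_of_linearIndependent hw⟩

/-- The **Dvoretzky–Rogers lemma**. -/
theorem exists_hasUpperTwoEstimate_abs_le (hY : ¬ FiniteDimensional ℝ Y) (N : ℕ) :
    ∃ w : Fin N → Y, HasUpperTwoEstimate w ∧
      ∀ (c : Fin N → ℝ) (i : Fin N), |c i| ≤ 2 * ‖∑ j, c j • w j‖ := by
  set δ : ℝ := 1 / (32 * (N + 1))
  have hδ : 0 < δ := by positivity
  have hδN : 32 * (N * δ) ≤ 1 := by
    simp only [δ]
    field_simp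
    linarith
  have hδ_le : δ ≤ 1 := by
    rw [div_le_one (by positivity)]
    linarith [(Nat.cast_nonneg N : (0 : ℝ) ≤ N)]
  obtain ⟨n, hn⟩ := exists_nat_gt (N / δ)
  rw [div_lt_iff₀ hδ] at hn
  obtain ⟨φ, hφ⟩ := exists_injective_euclideanSpace hY n
  obtain ⟨M, hu⟩ := exists_isMaximalVolumeContraction_comp hφ
  obtain ⟨e, he, hue⟩ := hu.exists_orthonormal_norm_ge hδ_le (N := N) (by simpa using hn)
  have hw := hasUpperTwoEstimate_of_orthonormal he hu.norm_apply_le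
  exact ⟨_, hw, hw.abs_le_two_mul_norm_sum (by simpa using hδN) hue⟩

end DvoretzkyRogers

section Dvoretzky

open MeasureTheory Module
open scoped RealInnerProductSpace

section SampleMap

variable {X V ι : Type*} [NormedAddCommGroup X] [NormedSpace ℝ X]
  [NormedAddCommGroup V] [InnerProductSpace ℝ V] [Fintype ι]

/-- The radial contraction `x ↦ x / (1 + ‖x‖)` into the unit ball. It makes random sums of vectors
bounded, so that they are integrable against every probability measure. -/
noncomputable def radialClip (x : V) : V := (1 + ‖x‖)⁻¹ • x

theorem norm_radialClip_le_one (x : V) : ‖radialClip x‖ ≤ 1 := by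
  have h : 0 < 1 + ‖x‖ := by positivity
  rw [radialClip, norm_smul, norm_inv, Real.norm_of_nonneg h.le, inv_mul_le_iff₀ h]
  linarith

@[fun_prop]
theorem continuous_radialClip : Continuous (radialClip : V → V) := by
  unfold radialClip
  refine Continuous.smul (Continuous.inv₀ (by fun_prop) fun x => ?_) continuous_id
  positivity

theorem radialClip_map (R : V ≃ₗᵢ[ℝ] V) (x : V) : radialClip (R x) = R (radialClip x) := by
  simp [radialClip]

theorem abs_inner_radialClip_le (t x : V) : |⟪t, radialClip x⟫| ≤ ‖t‖ :=
  (abs_real_inner_le_norm _ _).trans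
    (mul_le_of_le_one_right (norm_nonneg _) (norm_radialClip_le_one x))

/-- The linear map `t ↦ ∑ j, ⟪t, ζ j⟫ • v j`, where `ζ j` is the clipped sample `ξ j`. For
independent samples from a rotation invariant measure it plays the role of the Gaussian operator
in the usual proof of Dvoretzky's theorem. -/
noncomputable def sampleMap (v : ι → X) (ξ : ι → V) : V →ₗ[ℝ] X :=
  ∑ j, ((innerₗ V).flip (radialClip (ξ j))).smulRight (v j)

theorem sampleMap_apply (v : ι → X) (ξ : ι → V) (t : V) :
    sampleMap v ξ t = ∑ j, ⟪t, radialClip (ξ j)⟫ • v j := by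
  simp [sampleMap, real_inner_comm]

theorem sampleMap_comp_map (v : ι → X) (ξ : ι → V) (R : V ≃ₗᵢ[ℝ] V) (t : V) :
    sampleMap v (fun j => R (ξ j)) (R t) = sampleMap v ξ t := by
  simp [sampleMap_apply, radialClip_map]

theorem sampleMap_comp_neg (v : ι → X) (ξ : ι → V) (t : V) :
    sampleMap v (fun j => LinearIsometryEquiv.neg ℝ (ξ j)) t = -sampleMap v ξ t := by
  simp only [sampleMap_apply, radialClip_map]
  simp

theorem sampleMap_mem (v : ι → X) {Y : Submodule ℝ X} (hv : ∀ j, v j ∈ Y) (ξ : ι → V) (t : V) :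
    sampleMap v ξ t ∈ Y := by
  rw [sampleMap_apply]
  exact Y.sum_mem fun j _ => Y.smul_mem _ (hv j)

theorem sampleMap_sub_sampleMap_update [DecidableEq ι] (v : ι → X) (ξ : ι → V) (i : ι) (s t : V) :
    sampleMap v ξ t - sampleMap v (Function.update ξ i s) t =
      (⟪t, radialClip (ξ i)⟫ - ⟪t, radialClip s⟫) • v i := by
  rw [sampleMap_apply, sampleMap_apply, ← Finset.sum_sub_distrib, Finset.sum_eq_single i]
  · simp [sub_smul]
  · intro j _ hj
    simp [Function.update_of_ne hj]
  · simp

theorem continuous_norm_add_sampleMap (v : ι → X) (h : X) (t : V) :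
    Continuous fun ξ : ι → V => ‖h + sampleMap v ξ t‖ := by
  simp only [sampleMap_apply]
  fun_prop

theorem abs_norm_add_sampleMap_le (v : ι → X) (h : X) (t : V) (ξ : ι → V) :
    |‖h + sampleMap v ξ t‖| ≤ ‖h‖ + ∑ j, ‖t‖ * ‖v j‖ := by
  rw [abs_norm, sampleMap_apply]
  refine (norm_add_le _ _).trans (add_le_add_right (norm_sum_le_of_le _ fun j _ => ?_) _)
  rw [norm_smul]
  exact mul_le_mul_of_nonneg_right (abs_inner_radialClip_le _ _) (norm_nonneg _)

theorem max_norm_sub_norm_update_le [DecidableEq ι] (v : ι → X) (h : X) (t : V) (ξ : ι → V)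
    (i : ι) (s : V) {g : X →L[ℝ] ℝ} (hg : ‖g‖ ≤ 1)
    (hgξ : g (h + sampleMap v ξ t) = ‖h + sampleMap v ξ t‖) :
    max (‖h + sampleMap v ξ t‖ - ‖h + sampleMap v (Function.update ξ i s) t‖) 0 ≤
      2 * ‖t‖ * |g (v i)| := by
  refine max_le ?_ (by positivity)
  have hcoeff : |⟪t, radialClip (ξ i)⟫ - ⟪t, radialClip s⟫| ≤ 2 * ‖t‖ := by
    refine (abs_sub _ _).trans ?_
    linarith [abs_inner_radialClip_le t (ξ i), abs_inner_radialClip_le t s]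
  have hupdate : g (h + sampleMap v (Function.update ξ i s) t) ≤
      ‖h + sampleMap v (Function.update ξ i s) t‖ :=
    (le_abs_self _).trans ((g.le_of_opNorm_le hg _).trans_eq (one_mul _))
  calc ‖h + sampleMap v ξ t‖ - ‖h + sampleMap v (Function.update ξ i s) t‖
      ≤ g (sampleMap v ξ t - sampleMap v (Function.update ξ i s) t) := by
        rw [← hgξ, map_sub]
        rw [map_add] at hupdate ⊢
        linarith
    _ ≤ |(⟪t, radialClip (ξ i)⟫ - ⟪t, radialClip s⟫) * g (v i)| := by
        rw [sampleMap_sub_sampleMap_update, map_smul, smul_eq_mul]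
        exact le_abs_self _
    _ ≤ 2 * ‖t‖ * |g (v i)| := by
        rw [abs_mul]
        gcongr

theorem HasUpperTwoEstimate.sum_sq_max_norm_sub_le [DecidableEq ι] {v : ι → X}
    (hv : HasUpperTwoEstimate v) (h : X) (t : V) (ξ s : ι → V) :
    ∑ i, max (‖h + sampleMap v ξ t‖ - ‖h + sampleMap v (Function.update ξ i (s i)) t‖) 0 ^ 2 ≤
      4 * ‖t‖ ^ 2 := by
  obtain ⟨g, hg, hgξ⟩ := exists_dual_vector'' ℝ (h + sampleMap v ξ t)
  calc _ ≤ ∑ i, (2 * ‖t‖ * |g (v i)|) ^ 2 := by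
        gcongr with i
        exact max_norm_sub_norm_update_le v h t ξ i (s i) hg hgξ
    _ = 4 * ‖t‖ ^ 2 * ∑ i, g (v i) ^ 2 := by
        simp only [mul_pow, sq_abs, Finset.mul_sum]
        norm_num
    _ ≤ 4 * ‖t‖ ^ 2 := mul_le_of_le_one_right (by positivity) (hv.sum_sq_apply_le_one hg)

end SampleMap

section RotationInvariant

variable {X V ι : Type*} [NormedAddCommGroup X] [NormedSpace ℝ X]
  [NormedAddCommGroup V] [InnerProductSpace ℝ V] [FiniteDimensional ℝ V] [MeasurableSpace V]
  [BorelSpace V] [Fintype ι] {μ : Measure V} [IsProbabilityMeasure μ]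

/-- Invariance of a measure on an inner product space under all linear isometries. -/
def IsRotationInvariant {V : Type*} [NormedAddCommGroup V] [InnerProductSpace ℝ V]
    [MeasurableSpace V] (μ : Measure V) : Prop :=
  ∀ R : V ≃ₗᵢ[ℝ] V, MeasurePreserving R μ μ

theorem isRotationInvariant_cond_ball :
    IsRotationInvariant (ProbabilityTheory.cond volume (Metric.ball (0 : V) 1)) := by
  intro R
  have hR := R.measurePreserving.restrict_preimage (s := Metric.ball (0 : V) 1) measurableSet_ball
  have hball : R ⁻¹' Metric.ball (0 : V) 1 = Metric.ball 0 1 := by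
    ext
    simp
  rw [hball] at hR
  exact hR.smul_measure _

theorem cond_ball_setOf_le_inner_radialClip_pos {t : V} (ht : ‖t‖ = 1) :
    0 < ProbabilityTheory.cond volume (Metric.ball (0 : V) 1)
      {x | 1 / 8 ≤ ⟪t, radialClip x⟫} := by
  rw [ProbabilityTheory.cond_apply measurableSet_ball]
  refine ENNReal.mul_pos (ENNReal.inv_ne_zero.2 measure_ball_lt_top.ne) ?_
  have hopen : IsOpen (Metric.ball (0 : V) 1 ∩ {x | 1 / 8 < ⟪t, radialClip x⟫}) :=
    Metric.isOpen_ball.inter (isOpen_lt continuous_const (by fun_prop))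
  have hhalf : (1 / 2 : ℝ) • t ∈ Metric.ball (0 : V) 1 ∩ {x | 1 / 8 < ⟪t, radialClip x⟫} := by
    refine ⟨?_, Set.mem_ofPred_eq.ge ?_⟩
    · simp only [mem_ball_zero_iff, norm_smul, ht]
      norm_num
    · simp only [radialClip, norm_smul, ht, inner_smul_right, real_inner_self_eq_norm_sq]
      norm_num
  refine ((hopen.measure_pos volume ⟨_, hhalf⟩).trans_le (measure_mono ?_)).ne'
  gcongr
  exact fun h => h.le

theorem exists_isRotationInvariant (V : Type*) [NormedAddCommGroup V] [InnerProductSpace ℝ V]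
    [FiniteDimensional ℝ V] [MeasurableSpace V] [BorelSpace V] :
    ∃ μ : Measure V, IsProbabilityMeasure μ ∧ IsRotationInvariant μ ∧
      ∀ t : V, ‖t‖ = 1 → 0 < μ {x | 1 / 8 ≤ ⟪t, radialClip x⟫} :=
  ⟨ProbabilityTheory.cond volume (Metric.ball 0 1),
    ProbabilityTheory.cond_isProbabilityMeasure_of_finite
      (Metric.measure_ball_pos volume _ one_pos).ne' measure_ball_lt_top.ne,
    isRotationInvariant_cond_ball, fun _ => cond_ball_setOf_le_inner_radialClip_pos⟩

theorem integrable_norm_add_sampleMap (μ : Measure V) [IsProbabilityMeasure μ] (v : ι → X) (h : X)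
    (t : V) : Integrable (fun ξ => ‖h + sampleMap v ξ t‖) (Measure.pi fun _ : ι => μ) :=
  integrable_of_abs_le (continuous_norm_add_sampleMap v h t).measurable
    (abs_norm_add_sampleMap_le v h t)

theorem IsRotationInvariant.integral_norm_add_sampleMap_comp (hμ : IsRotationInvariant μ)
    (v : ι → X) (h : X) (t : V) (R : V ≃ₗᵢ[ℝ] V) :
    ∫ ξ, ‖h + sampleMap v (fun j => R (ξ j)) t‖ ∂(Measure.pi fun _ : ι => μ) =
      ∫ ξ, ‖h + sampleMap v ξ t‖ ∂(Measure.pi fun _ : ι => μ) := by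
  have hR := measurePreserving_pi (fun _ : ι => μ) (fun _ => μ) (f := fun _ => R) fun _ => hμ R
  conv_rhs => rw [← hR.map_eq]
  rw [integral_map hR.measurable.aemeasurable
    (continuous_norm_add_sampleMap v h t).aestronglyMeasurable]

theorem IsRotationInvariant.integral_norm_sampleMap_eq (hμ : IsRotationInvariant μ) (v : ι → X)
    {t t' : V} (ht : ‖t‖ = ‖t'‖) :
    ∫ ξ, ‖sampleMap v ξ t‖ ∂(Measure.pi fun _ : ι => μ) =
      ∫ ξ, ‖sampleMap v ξ t'‖ ∂(Measure.pi fun _ : ι => μ) := by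
  obtain ⟨R, rfl⟩ : ∃ R : V ≃ₗᵢ[ℝ] V, R t = t' := ⟨_, Submodule.reflection_sub ht⟩
  simpa [sampleMap_comp_map] using hμ.integral_norm_add_sampleMap_comp v 0 (R t) R

theorem IsRotationInvariant.integral_norm_sampleMap_le (hμ : IsRotationInvariant μ) (v : ι → X)
    (h : X) (t : V) :
    ∫ ξ, ‖sampleMap v ξ t‖ ∂(Measure.pi fun _ : ι => μ) ≤
      ∫ ξ, ‖h + sampleMap v ξ t‖ ∂(Measure.pi fun _ : ι => μ) := by
  have hint (k : X) := integrable_norm_add_sampleMap μ v k t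
  have hneg : ∫ ξ, ‖-h + sampleMap v ξ t‖ ∂(Measure.pi fun _ : ι => μ) =
      ∫ ξ, ‖h + sampleMap v ξ t‖ ∂(Measure.pi fun _ : ι => μ) := by
    rw [← hμ.integral_norm_add_sampleMap_comp v (-h) t (LinearIsometryEquiv.neg ℝ)]
    simp only [sampleMap_comp_neg, ← neg_add, norm_neg]
  have hmid (ξ : ι → V) :
      2 * ‖sampleMap v ξ t‖ ≤ ‖h + sampleMap v ξ t‖ + ‖-h + sampleMap v ξ t‖ :=
    calc 2 * ‖sampleMap v ξ t‖ = ‖(h + sampleMap v ξ t) + (-h + sampleMap v ξ t)‖ := by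
          rw [← Real.norm_ofNat 2, ← norm_smul, two_smul]
          congr 1
          abel
      _ ≤ _ := norm_add_le _ _
  have hmono := integral_mono (by simpa using (hint 0).const_mul 2) ((hint h).add (hint (-h))) hmid
  rw [integral_const_mul, integral_add' (hint h) (hint (-h)), hneg] at hmono
  linarith

end RotationInvariant

section Replication

variable {X Ω α β κ : Type*} [NormedAddCommGroup X] [NormedSpace ℝ X]
  [MeasurableSpace Ω] [Fintype α] [Fintype β] [Fintype κ]

theorem pi_eq_map_pi_pi (e : κ ≃ α × β) (μ : Measure Ω) [IsProbabilityMeasure μ] :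
    Measure.pi (fun _ : κ => μ) = (Measure.pi fun _ : α => Measure.pi fun _ : β => μ).map
      (fun ω k => ω (e k).1 (e k).2) := by
  refine Measure.pi_eq fun s hs => ?_
  rw [Measure.map_apply (by fun_prop) (MeasurableSet.univ_pi hs)]
  have hpre : (fun (ω : α → β → Ω) k => ω (e k).1 (e k).2) ⁻¹' (Set.univ.pi s) =
      Set.univ.pi fun i => Set.univ.pi fun l => s (e.symm (i, l)) := by
    ext ω
    simp only [Set.mem_preimage, Set.mem_univ_pi]
    exact ⟨fun h i l => by simpa using h (e.symm (i, l)),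
      fun h k => by simpa using h (e k).1 (e k).2⟩
  simp only [hpre, Measure.pi_pi]
  rw [← Fintype.prod_prod_type' fun i l => μ (s (e.symm (i, l)))]
  exact Equiv.prod_comp e.symm fun k => μ (s k)

theorem measureReal_pi_compl_setOf_exists_forall_mem (e : κ ≃ α × β) (μ : Measure Ω)
    [IsProbabilityMeasure μ] {S : Set Ω} (hS : MeasurableSet S) :
    (Measure.pi (fun _ : κ => μ)).real {ξ | ∃ i, ∀ l, ξ (e.symm (i, l)) ∈ S}ᶜ =
      (1 - μ.real S ^ Fintype.card β) ^ Fintype.card α := by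
  have hmeas : MeasurableSet {ξ : κ → Ω | ∃ i, ∀ l, ξ (e.symm (i, l)) ∈ S}ᶜ := by
    have hUnion : {ξ : κ → Ω | ∃ i, ∀ l, ξ (e.symm (i, l)) ∈ S} =
        ⋃ i, ⋂ l, (fun ξ => ξ (e.symm (i, l))) ⁻¹' S := by
      ext
      simp
    rw [hUnion]
    exact (MeasurableSet.iUnion fun i => MeasurableSet.iInter fun l =>
      measurable_pi_apply _ hS).compl
  have hpre : (fun (ω : α → β → Ω) k => ω (e k).1 (e k).2) ⁻¹'
      {ξ : κ → Ω | ∃ i, ∀ l, ξ (e.symm (i, l)) ∈ S}ᶜ =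
      Set.univ.pi fun _ => (Set.univ.pi fun _ => S)ᶜ := by
    ext
    simp
  have hpi : (Measure.pi fun _ : β => μ).real (Set.univ.pi fun _ => S) =
      μ.real S ^ Fintype.card β := by
    simp [measureReal_def, Measure.pi_pi]
  rw [pi_eq_map_pi_pi e μ, map_measureReal_apply (by fun_prop) hmeas, hpre, ← hpi,
    ← probReal_compl_eq_one_sub (MeasurableSet.univ_pi fun _ => hS)]
  simp [measureReal_def, Measure.pi_pi]

theorem exists_half_le_measureReal_pi (μ : Measure Ω) [IsProbabilityMeasure μ] {S : Set Ω}
    (hS : MeasurableSet S) (hμS : 0 < μ S) (m : ℕ) :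
    ∃ N : ℕ, 1 / 2 ≤ (Measure.pi fun _ : Fin (N * m) => μ).real
      {ξ | ∃ i : Fin N, ∀ l : Fin m, ξ (finProdFinEquiv (i, l)) ∈ S} := by
  have hp : 0 < μ.real S := ENNReal.toReal_pos hμS.ne' (measure_ne_top _ _)
  obtain ⟨N, hN⟩ := exists_pow_lt_of_lt_one (by norm_num : (0 : ℝ) < 1 / 2)
    (sub_lt_self 1 (pow_pos hp m))
  refine ⟨N, ?_⟩
  have hcompl := measureReal_pi_compl_setOf_exists_forall_mem
    (finProdFinEquiv (m := N) (n := m)).symm μ hS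
  rw [Fintype.card_fin, Fintype.card_fin, Equiv.symm_symm] at hcompl
  have hunion := measureReal_union_le (μ := Measure.pi fun _ : Fin (N * m) => μ)
    {ξ | ∃ i : Fin N, ∀ l : Fin m, ξ (finProdFinEquiv (i, l)) ∈ S}
    {ξ | ∃ i : Fin N, ∀ l : Fin m, ξ (finProdFinEquiv (i, l)) ∈ S}ᶜ
  rw [Set.union_compl_self, probReal_univ, hcompl] at hunion
  linarith

theorem sum_smul_smul_fst (e : κ ≃ α × β) (w : α → X) (r : ℝ) (c : κ → ℝ) :
    ∑ k, c k • r • w (e k).1 = ∑ i, (r * ∑ l, c (e.symm (i, l))) • w i := by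
  rw [← Equiv.sum_comp e.symm, Fintype.sum_prod_type]
  refine Finset.sum_congr rfl fun i _ => ?_
  simp [smul_smul, Finset.mul_sum, Finset.sum_smul, mul_comm]

theorem HasUpperTwoEstimate.inv_sqrt_smul_fst {w : α → X} (hw : HasUpperTwoEstimate w)
    (e : κ ≃ α × β) : HasUpperTwoEstimate fun k => (√(Fintype.card β : ℝ))⁻¹ • w (e k).1 := by
  intro c
  rw [sum_smul_smul_fst]
  refine (hw _).trans ?_
  rw [← Equiv.sum_comp e.symm fun k => c k ^ 2, Fintype.sum_prod_type]
  refine Finset.sum_le_sum fun i _ => ?_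
  rcases isEmpty_or_nonempty β with hβ | hβ
  · simp
  have hcauchy := sq_sum_le_card_mul_sum_sq (s := Finset.univ) (f := fun l => c (e.symm (i, l)))
  rw [mul_pow, inv_pow, Real.sq_sqrt (Nat.cast_nonneg _),
    inv_mul_le_iff₀ (Nat.cast_pos.2 Fintype.card_pos)]
  exact hcauchy

theorem sqrt_card_mul_le_norm_sum_inv_sqrt_smul_fst {w : α → X}
    (hw : ∀ (c : α → ℝ) (i : α), |c i| ≤ 2 * ‖∑ j, c j • w j‖) (e : κ ≃ α × β) {c : κ → ℝ} {r : ℝ}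
    {i : α} (hc : ∀ l, r ≤ c (e.symm (i, l))) :
    √(Fintype.card β) * r ≤ 2 * ‖∑ k, c k • (√(Fintype.card β : ℝ))⁻¹ • w (e k).1‖ := by
  rw [sum_smul_smul_fst]
  refine le_trans ?_ ((le_abs_self _).trans (hw _ i))
  have hsum : Fintype.card β * r ≤ ∑ l, c (e.symm (i, l)) := by
    simpa using Finset.card_nsmul_le_sum Finset.univ _ r fun l _ => hc l
  calc √(Fintype.card β) * r = (√(Fintype.card β))⁻¹ * (Fintype.card β * r) := by
        rw [← mul_assoc, inv_mul_eq_div, Real.div_sqrt]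
    _ ≤ _ := by gcongr

variable {V : Type*} [NormedAddCommGroup V] [InnerProductSpace ℝ V] [MeasurableSpace V]
  [BorelSpace V] [FiniteDimensional ℝ V]

theorem exists_le_integral_norm_sampleMap {Y : Submodule ℝ X} (hY : ¬ FiniteDimensional ℝ Y)
    (μ : Measure V) [IsProbabilityMeasure μ] {t : V}
    (ht : 0 < μ {x | 1 / 8 ≤ ⟪t, radialClip x⟫}) (a : ℝ) :
    ∃ (L : ℕ) (v : Fin L → X), (∀ j, v j ∈ Y) ∧ HasUpperTwoEstimate v ∧
      a ≤ ∫ ξ, ‖sampleMap v ξ t‖ ∂(Measure.pi fun _ : Fin L => μ) := by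
  have hS : MeasurableSet {x | 1 / 8 ≤ ⟪t, radialClip x⟫} :=
    (isClosed_le continuous_const (by fun_prop)).measurableSet
  obtain ⟨m, hm⟩ := exists_nat_ge ((32 * a) ^ 2)
  obtain ⟨N, hN⟩ := exists_half_le_measureReal_pi μ hS ht m
  obtain ⟨w, hw, hw_lower⟩ := exists_hasUpperTwoEstimate_abs_le hY N
  have hwX : HasUpperTwoEstimate fun i => (w i : X) := fun c => by simpa using hw c
  have hwX_lower (c : Fin N → ℝ) (i) : |c i| ≤ 2 * ‖∑ j, c j • (w j : X)‖ := by
    simpa using hw_lower c i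
  let e : Fin (N * m) ≃ Fin N × Fin m := finProdFinEquiv.symm
  let v : Fin (N * m) → X := fun k => (√(m : ℝ))⁻¹ • (w (e k).1 : X)
  refine ⟨N * m, v, fun k => Y.smul_mem _ (w _).2, by simpa using hwX.inv_sqrt_smul_fst e, ?_⟩
  have hsub : {ξ : Fin (N * m) → V | ∃ i, ∀ l, 1 / 8 ≤ ⟪t, radialClip (ξ (e.symm (i, l)))⟫} ⊆
      {ξ | √m / 16 ≤ ‖sampleMap v ξ t‖} := by
    rintro ξ ⟨i, hi⟩
    have hlower : √m * (1 / 8) ≤ 2 * ‖sampleMap v ξ t‖ := by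
      simpa only [Fintype.card_fin, sampleMap_apply] using
        sqrt_card_mul_le_norm_sum_inv_sqrt_smul_fst hwX_lower e hi
    exact Set.mem_ofPred_eq.ge (by linarith)
  have hmarkov := mul_meas_ge_le_integral_of_nonneg
    (Filter.Eventually.of_forall fun _ => norm_nonneg _)
    (by simpa using integrable_norm_add_sampleMap μ v 0 t) (√m / 16)
  calc a ≤ √m / 16 * (1 / 2) := by linarith [Real.le_sqrt_of_sq_le hm]
    _ ≤ √m / 16 * (Measure.pi fun _ => μ).real {ξ | √m / 16 ≤ ‖sampleMap v ξ t‖} := by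
        gcongr
        exact hN.trans (measureReal_mono hsub)
    _ ≤ _ := hmarkov

end Replication

section Nets

variable {X V : Type*} [NormedAddCommGroup X] [NormedSpace ℝ X]

theorem exists_finset_subset_forall_exists_dist_le {α : Type*} [PseudoMetricSpace α] {s : Set α}
    (hs : IsCompact s) {η : ℝ} (hη : 0 < η) :
    ∃ T : Finset α, (∀ t ∈ T, t ∈ s) ∧ ∀ x ∈ s, ∃ t ∈ T, dist x t ≤ η := by
  obtain ⟨T, hTs, hT, hcover⟩ := hs.finite_cover_balls hη
  lift T to Finset α using hT
  refine ⟨T, fun t ht => hTs ht, fun x hx => ?_⟩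
  obtain ⟨t, ht, hxt⟩ := Set.mem_iUnion₂.1 (hcover hx)
  exact ⟨t, ht, (Metric.mem_ball.1 hxt).le⟩

variable [NormedAddCommGroup V] [NormedSpace ℝ V] {T : Finset V} {η : ℝ}

theorem opNorm_le_of_forall_mem_net
    (hT : ∀ t : V, ‖t‖ = 1 → ∃ t' ∈ T, dist t t' ≤ η) (hη : η < 1) {u : V →L[ℝ] X} {C : ℝ}
    (hC : 0 ≤ C) (hu : ∀ t ∈ T, ‖u t‖ ≤ C) : ‖u‖ ≤ C / (1 - η) := by
  rcases subsingleton_or_nontrivial V with hV | hV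
  · rw [Subsingleton.elim u 0, norm_zero]
    have := sub_pos.2 hη
    positivity
  obtain ⟨t₀, ht₀⟩ := exists_norm_eq V zero_le_one
  obtain ⟨t₁, -, ht₁⟩ := hT t₀ ht₀
  have hη_nonneg : 0 ≤ η := dist_nonneg.trans ht₁
  rw [le_div_iff₀ (sub_pos.2 hη)]
  suffices ‖u‖ ≤ C + ‖u‖ * η by linarith
  refine u.opNorm_le_of_unit_norm (by positivity) fun t ht => ?_
  obtain ⟨t', ht', hdist⟩ := hT t ht
  rw [dist_eq_norm] at hdist
  calc ‖u t‖ = ‖u t' + u (t - t')‖ := by rw [← map_add, add_sub_cancel]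
    _ ≤ ‖u t'‖ + ‖u (t - t')‖ := norm_add_le _ _
    _ ≤ C + ‖u‖ * η := add_le_add (hu t' ht') (u.le_opNorm_of_le hdist)

theorem sub_le_norm_add_of_forall_mem_net
    (hT : ∀ t : V, ‖t‖ = 1 → ∃ t' ∈ T, dist t t' ≤ η) {s : Set X} {K : Finset X}
    (hK : ∀ h ∈ s, ∃ k ∈ K, dist h k ≤ η) {u : V →L[ℝ] X} {c : ℝ}
    (hu : ∀ t ∈ T, ∀ k ∈ K, c ≤ ‖k + u t‖) {t : V} (ht : ‖t‖ = 1) {h : X} (hh : h ∈ s) :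
    c - (1 + ‖u‖) * η ≤ ‖h + u t‖ := by
  obtain ⟨t', ht', hdt⟩ := hT t ht
  obtain ⟨k, hk, hdk⟩ := hK h hh
  rw [dist_eq_norm] at hdt hdk
  have hsplit : k + u t' = (h + u t) - ((h - k) + u (t - t')) := by
    rw [map_sub]
    abel
  have hnorm : ‖k + u t'‖ ≤ ‖h + u t‖ + (‖h - k‖ + ‖u (t - t')‖) := by
    rw [hsplit]
    exact (norm_sub_le _ _).trans (add_le_add_right (norm_add_le _ _) _)
  linarith [hu t' ht' k hk, u.le_opNorm_of_le hdt]

theorem sub_four_mul_le_norm_add_of_forall_mem_net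
    (hT : ∀ t : V, ‖t‖ = 1 → ∃ t' ∈ T, dist t t' ≤ η) (hη : 0 ≤ η) {H : Submodule ℝ X}
    {K : Finset X} (hK : ∀ h ∈ (↑) '' Metric.closedBall (0 : H) 4, ∃ k ∈ K, dist h k ≤ η)
    {u : V →L[ℝ] X} (hu_norm : ‖u‖ ≤ 2) (hu : ∀ t ∈ T, ∀ k ∈ K, 1 - η ≤ ‖k + u t‖)
    {t : V} (ht : ‖t‖ = 1) {h : X} (hh : h ∈ H) : 1 - 4 * η ≤ ‖h + u t‖ := by
  rcases le_or_gt ‖h‖ 4 with hle | hgt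
  · have hnet := sub_le_norm_add_of_forall_mem_net hT hK hu ht ⟨⟨h, hh⟩, by simpa using hle, rfl⟩
    nlinarith
  · have htri : ‖h‖ ≤ ‖h + u t‖ + ‖u t‖ := by simpa using norm_sub_le (h + u t) (u t)
    have hut : ‖u t‖ ≤ 2 := by simpa [ht] using u.le_of_opNorm_le hu_norm t
    linarith

theorem mul_norm_le_norm_add_of_norm_eq_one {H : Submodule ℝ X} {u : V →ₗ[ℝ] X} {c : ℝ}
    (hu : ∀ t, ‖t‖ = 1 → ∀ h ∈ H, c ≤ ‖h + u t‖) (t : V) {h : X} (hh : h ∈ H) :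
    c * ‖t‖ ≤ ‖h + u t‖ := by
  rcases eq_or_ne t 0 with rfl | ht
  · simp
  have ht_pos : 0 < ‖t‖ := norm_pos_iff.2 ht
  have hunit := hu (‖t‖⁻¹ • t) (by rw [norm_smul, norm_inv, norm_norm, inv_mul_cancel₀ ht_pos.ne'])
    (‖t‖⁻¹ • h) (H.smul_mem _ hh)
  rwa [map_smul, ← smul_add, norm_smul, norm_inv, norm_norm, inv_mul_eq_div,
    le_div_iff₀ ht_pos] at hunit

end Nets

section Concentration

variable {X V : Type*} [NormedAddCommGroup X] [NormedSpace ℝ X]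
  [NormedAddCommGroup V] [InnerProductSpace ℝ V] [FiniteDimensional ℝ V]

theorem HasUpperTwoEstimate.exists_abs_norm_add_sampleMap_sub_integral_lt [MeasurableSpace V]
    [BorelSpace V] (μ : Measure V) [IsProbabilityMeasure μ] {L : ℕ} {v : Fin L → X}
    (hv : HasUpperTwoEstimate v) {c : ℝ} (hc : 0 < c) (Q : Finset (V × X))
    (hQ : ∀ p ∈ Q, ‖p.1‖ = 1) (hcard : 4 * (Q.card : ℝ) < c ^ 2) :
    ∃ ξ : Fin L → V, ∀ p ∈ Q, |‖p.2 + sampleMap v ξ p.1‖ -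
      ∫ ξ, ‖p.2 + sampleMap v ξ p.1‖ ∂(Measure.pi fun _ : Fin L => μ)| < c := by
  let bad (p : V × X) : Set (Fin L → V) := {ξ | c ≤ |‖p.2 + sampleMap v ξ p.1‖ -
    ∫ ξ, ‖p.2 + sampleMap v ξ p.1‖ ∂(Measure.pi fun _ : Fin L => μ)|}
  have hbad : ∀ p ∈ Q, (Measure.pi fun _ => μ).real (bad p) ≤ 4 / c ^ 2 := fun p hp =>
    measureReal_pi_abs_sub_integral_ge_le (continuous_norm_add_sampleMap v _ _).measurable
      (abs_norm_add_sampleMap_le v _ _)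
      (fun ξ s => by simpa [hQ p hp] using hv.sum_sq_max_norm_sub_le p.2 p.1 ξ s) hc
  have hlt : (Measure.pi fun _ => μ).real (⋃ p ∈ Q, bad p) < 1 := by
    refine (measureReal_biUnion_finset_le _ _).trans_lt ((Finset.sum_le_sum hbad).trans_lt ?_)
    rw [Finset.sum_const, nsmul_eq_mul, ← mul_div_assoc, div_lt_one (by positivity)]
    linarith
  by_contra! hcon
  have hcover : ⋃ p ∈ Q, bad p = Set.univ := Set.eq_univ_of_forall fun ξ =>
    let ⟨_, hp, hξ⟩ := hcon ξ
    Set.mem_biUnion hp hξ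
  rw [hcover, probReal_univ] at hlt
  exact hlt.false

theorem IsRotationInvariant.exists_norm_sampleMap_le_and_le [MeasurableSpace V] [BorelSpace V]
    {μ : Measure V} [IsProbabilityMeasure μ] (hμ : IsRotationInvariant μ) {L : ℕ} {v : Fin L → X}
    (hv : HasUpperTwoEstimate v) {A η : ℝ} (hA : 0 < A) (hη : 0 < η) (T : Finset V)
    (hT : ∀ t ∈ T, ‖t‖ = 1)
    (hAT : ∀ t ∈ T, ∫ ξ, ‖sampleMap v ξ t‖ ∂(Measure.pi fun _ : Fin L => μ) = A)
    (K : Finset X) (hcard : 4 * (T.card * (K.card + 1) : ℝ) < (η * A) ^ 2) :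
    ∃ ξ : Fin L → V, ∀ t ∈ T, ‖sampleMap v ξ t‖ ≤ (1 + η) * A ∧
      ∀ k ∈ K, (1 - η) * A ≤ ‖k + sampleMap v ξ t‖ := by
  classical
  have hcardQ : 4 * ((T ×ˢ insert 0 K).card : ℝ) < (η * A) ^ 2 := by
    have hinsert : ((insert 0 K).card : ℝ) ≤ K.card + 1 := by exact_mod_cast K.card_insert_le 0
    refine lt_of_le_of_lt ?_ hcard
    rw [Finset.card_product, Nat.cast_mul]
    gcongr
  obtain ⟨ξ, hξ⟩ := hv.exists_abs_norm_add_sampleMap_sub_integral_lt μ (mul_pos hη hA)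
    (T ×ˢ insert 0 K) (fun p hp => hT p.1 (Finset.mem_product.1 hp).1) hcardQ
  refine ⟨ξ, fun t ht => ⟨?_, fun k hk => ?_⟩⟩
  · have hzero := (abs_lt.1 (hξ (t, 0) (by simp [ht]))).2
    simp only [zero_add, hAT t ht] at hzero
    linarith
  · have hk' := (abs_lt.1 (hξ (t, k) (by simp [ht, hk]))).1
    have hmean := hμ.integral_norm_sampleMap_le v k t
    rw [hAT t ht] at hmean
    linarith

theorem exists_almost_isometry_on_finset {Y : Submodule ℝ X} (hY : ¬ FiniteDimensional ℝ Y)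
    (T : Finset V) (hT : ∀ t ∈ T, ‖t‖ = 1) (K : Finset X) {η : ℝ} (hη : 0 < η) :
    ∃ u : V →ₗ[ℝ] X, (∀ t, u t ∈ Y) ∧
      ∀ t ∈ T, ‖u t‖ ≤ 1 + η ∧ ∀ k ∈ K, 1 - η ≤ ‖k + u t‖ := by
  rcases T.eq_empty_or_nonempty with rfl | ⟨t₀, ht₀⟩
  · exact ⟨0, by simp, by simp⟩
  classical
  borelize V
  obtain ⟨μ, hμ_prob, hμ, hμ_pos⟩ := exists_isRotationInvariant V
  set r : ℝ := 4 * (T.card * (K.card + 1)) / η ^ 2 + 1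
  obtain ⟨L, v, hvY, hv, hr⟩ := exists_le_integral_norm_sampleMap hY μ (hμ_pos t₀ (hT t₀ ht₀)) r
  set A := ∫ ξ, ‖sampleMap v ξ t₀‖ ∂(Measure.pi fun _ : Fin L => μ)
  have hr_one : 1 ≤ r := le_add_of_nonneg_left (by positivity)
  have hA : 0 < A := by linarith
  have hcard : 4 * (T.card * ((K.image (A • ·)).card + 1) : ℝ) < (η * A) ^ 2 := by
    have himage : ((K.image (A • ·)).card : ℝ) ≤ K.card := by
      exact_mod_cast Finset.card_image_le
    calc _ ≤ 4 * (T.card * (K.card + 1) : ℝ) := by gcongr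
      _ = η ^ 2 * (r - 1) := by simp only [r]; field_simp; ring
      _ < η ^ 2 * A ^ 2 := by gcongr; nlinarith
      _ = (η * A) ^ 2 := (mul_pow _ _ _).symm
  obtain ⟨ξ, hξ⟩ := hμ.exists_norm_sampleMap_le_and_le hv hA hη T hT
    (fun t ht => hμ.integral_norm_sampleMap_eq v ((hT t ht).trans (hT t₀ ht₀).symm)) _ hcard
  refine ⟨A⁻¹ • sampleMap v ξ, fun t => Y.smul_mem _ (sampleMap_mem v hvY ξ t),
    fun t ht => ⟨?_, fun k hk => ?_⟩⟩
  · rw [LinearMap.smul_apply, norm_smul, norm_inv, Real.norm_of_nonneg hA.le, inv_mul_le_iff₀ hA,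
      mul_comm A]
    exact (hξ t ht).1
  · rw [LinearMap.smul_apply, ← inv_smul_smul₀ hA.ne' k, ← smul_add, norm_smul, norm_inv,
      Real.norm_of_nonneg hA.le, le_inv_mul_iff₀ hA, mul_comm]
    exact (hξ t ht).2 _ (Finset.mem_image_of_mem _ hk)

/-- **Dvoretzky's theorem**, with the almost isometric copy of Euclidean space chosen inside a
given infinite-dimensional subspace and almost orthogonal to a given finite-dimensional one. -/
theorem exists_almost_isometry_almost_orthogonal (V : Type*) [NormedAddCommGroup V]
    [InnerProductSpace ℝ V] [FiniteDimensional ℝ V] {Y : Submodule ℝ X}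
    (hY : ¬ FiniteDimensional ℝ Y) (H : Submodule ℝ X) [FiniteDimensional ℝ H] {δ : ℝ}
    (hδ : 0 < δ) :
    ∃ u : V →ₗ[ℝ] X, (∀ t, u t ∈ Y) ∧ (∀ t, ‖u t‖ ≤ (1 + δ) * ‖t‖) ∧
      ∀ t, ∀ h ∈ H, ‖t‖ ≤ (1 + δ) * ‖h + u t‖ := by
  obtain ⟨η, hη, hηδ, hη_one⟩ : ∃ η : ℝ, 0 < η ∧ 10 * η ≤ δ ∧ 10 * η ≤ 1 :=
    ⟨min δ 1 / 10, by positivity, by linarith [min_le_left δ 1], by linarith [min_le_right δ 1]⟩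
  obtain ⟨T, hT_unit, hT⟩ :=
    exists_finset_subset_forall_exists_dist_le (isCompact_sphere (0 : V) 1) hη
  simp only [mem_sphere_zero_iff_norm] at hT_unit hT
  have : ProperSpace H := FiniteDimensional.proper ℝ H
  obtain ⟨K, -, hK⟩ := exists_finset_subset_forall_exists_dist_le
    ((isCompact_closedBall (0 : H) 4).image continuous_subtype_val) hη
  obtain ⟨u, huY, huT⟩ := exists_almost_isometry_on_finset hY T hT_unit K hη
  have hu_le : ‖u.toContinuousLinearMap‖ ≤ (1 + η) / (1 - η) :=
    opNorm_le_of_forall_mem_net hT (by linarith) (by positivity) fun t ht => (huT t ht).1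
  have hratio : (1 + η) / (1 - η) ≤ 1 + 3 * η := by
    rw [div_le_iff₀ (by linarith)]
    nlinarith
  have hu_norm (t : V) : ‖u t‖ ≤ (1 + 3 * η) * ‖t‖ :=
    u.toContinuousLinearMap.le_of_opNorm_le (hu_le.trans hratio) t
  have hlower : ∀ t, ‖t‖ = 1 → ∀ h ∈ H, 1 - 4 * η ≤ ‖h + u t‖ := fun t ht h hh =>
    sub_four_mul_le_norm_add_of_forall_mem_net hT hη.le hK
      (u := u.toContinuousLinearMap) (by linarith) (fun t ht => (huT t ht).2) ht hh
  refine ⟨u, huY, fun t => (hu_norm t).trans (by gcongr; linarith), fun t h hh => ?_⟩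
  calc ‖t‖ ≤ (1 + δ) * (1 - 4 * η) * ‖t‖ := le_mul_of_one_le_left (norm_nonneg t) (by nlinarith)
    _ ≤ (1 + δ) * ‖h + u t‖ := by
        rw [mul_assoc]
        gcongr
        exact mul_norm_le_norm_add_of_norm_eq_one hlower t hh

end Concentration

end Dvoretzky

section Biorthogonal

variable {ι X : Type*} [NormedAddCommGroup X] [NormedSpace ℝ X]

/-- A biorthogonal system indexed by the finite set `s`, with `‖x i‖ * ‖xs i‖ < 1 + ε i`; terms
outside `s` are arbitrary. The strict bound leaves room to replace elements of the bidual by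
elements of the space. -/
structure IsBoundedBiorthogonalOn (s : Finset ι) (ε : ι → ℝ) (x : ι → X)
    (xs : ι → X →L[ℝ] ℝ) : Prop where
  apply_self : ∀ i ∈ s, xs i (x i) = 1
  apply_of_ne : ∀ i ∈ s, ∀ j ∈ s, i ≠ j → xs i (x j) = 0
  norm_mul_lt : ∀ i ∈ s, ‖x i‖ * ‖xs i‖ < 1 + ε i

namespace IsBoundedBiorthogonalOn

variable {s t : Finset ι} {ε : ι → ℝ} {x y : ι → X} {xs ys : ι → X →L[ℝ] ℝ}

theorem congr (h : IsBoundedBiorthogonalOn s ε x xs) (hx : Set.EqOn x y s)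
    (hxs : Set.EqOn xs ys s) : IsBoundedBiorthogonalOn s ε y ys where
  apply_self i hi := by rw [← hx hi, ← hxs hi, h.apply_self i hi]
  apply_of_ne i hi j hj hij := by rw [← hx hj, ← hxs hi, h.apply_of_ne i hi j hj hij]
  norm_mul_lt i hi := by
    rw [← hx hi, ← hxs hi]
    exact h.norm_mul_lt i hi

theorem mono (h : IsBoundedBiorthogonalOn s ε x xs) (hts : t ⊆ s) :
    IsBoundedBiorthogonalOn t ε x xs where
  apply_self i hi := h.apply_self i (hts hi)
  apply_of_ne i hi j hj := h.apply_of_ne i (hts hi) j (hts hj)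
  norm_mul_lt i hi := h.norm_mul_lt i (hts hi)

theorem union [DecidableEq ι] (hx : IsBoundedBiorthogonalOn s ε x xs)
    (hy : IsBoundedBiorthogonalOn t ε x xs) (hst : ∀ i ∈ s, ∀ j ∈ t, xs i (x j) = 0)
    (hts : ∀ i ∈ t, ∀ j ∈ s, xs i (x j) = 0) : IsBoundedBiorthogonalOn (s ∪ t) ε x xs where
  apply_self i hi := (Finset.mem_union.1 hi).elim (hx.apply_self i) (hy.apply_self i)
  apply_of_ne i hi j hj hij := by
    rcases Finset.mem_union.1 hi with hi | hi <;> rcases Finset.mem_union.1 hj with hj | hj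
    · exact hx.apply_of_ne i hi j hj hij
    · exact hst i hi j hj
    · exact hts i hi j hj
    · exact hy.apply_of_ne i hi j hj hij
  norm_mul_lt i hi := (Finset.mem_union.1 hi).elim (hx.norm_mul_lt i) (hy.norm_mul_lt i)

theorem piecewise [DecidableEq ι] (hx : IsBoundedBiorthogonalOn s ε x xs)
    (hy : IsBoundedBiorthogonalOn t ε y ys) (hst : Disjoint s t)
    (hxy : ∀ i ∈ s, ∀ j ∈ t, xs i (y j) = 0) (hyx : ∀ i ∈ t, ∀ j ∈ s, ys i (x j) = 0) :
    IsBoundedBiorthogonalOn (s ∪ t) ε (s.piecewise x y) (s.piecewise xs ys) := by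
  have hns : ∀ i ∈ t, i ∉ s := fun i hi his => Finset.disjoint_left.1 hst his hi
  refine (hx.congr ?_ ?_).union (hy.congr ?_ ?_) (fun i hi j hj => ?_) fun i hi j hj => ?_
  · exact fun i hi => (s.piecewise_eq_of_mem x y hi).symm
  · exact fun i hi => (s.piecewise_eq_of_mem xs ys hi).symm
  · exact fun i hi => (s.piecewise_eq_of_notMem x y (hns i hi)).symm
  · exact fun i hi => (s.piecewise_eq_of_notMem xs ys (hns i hi)).symm
  · rw [s.piecewise_eq_of_mem xs ys hi, s.piecewise_eq_of_notMem x y (hns j hj), hxy i hi j hj]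
  · rw [s.piecewise_eq_of_notMem xs ys (hns i hi), s.piecewise_eq_of_mem x y hj, hyx i hi j hj]

theorem dual (h : IsBoundedBiorthogonalOn s ε x xs) :
    IsBoundedBiorthogonalOn s ε xs fun i => NormedSpace.inclusionInDoubleDual ℝ X (x i) where
  apply_self := h.apply_self
  apply_of_ne i hi j hj hij := h.apply_of_ne j hj i hi hij.symm
  norm_mul_lt i hi := by
    have hnorm : ‖NormedSpace.inclusionInDoubleDual ℝ X (x i)‖ = ‖x i‖ :=
      (NormedSpace.inclusionInDoubleDualLi ℝ).norm_map (x i)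
    rw [hnorm, mul_comm]
    exact h.norm_mul_lt i hi

theorem apply_sub_sum (h : IsBoundedBiorthogonalOn s ε x xs) (v : X) {k : ι} (hk : k ∈ s) :
    xs k (v - ∑ i ∈ s, xs i v • x i) = 0 := by
  rw [map_sub, map_sum, Finset.sum_eq_single_of_mem k hk fun j hj hjk => ?_, map_smul,
    h.apply_self k hk, smul_eq_mul, mul_one, sub_self]
  rw [map_smul, h.apply_of_ne k hk j hj hjk.symm, smul_zero]

theorem sub_sum_apply (h : IsBoundedBiorthogonalOn s ε x xs) (f : X →L[ℝ] ℝ) {k : ι}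
    (hk : k ∈ s) : (f - ∑ i ∈ s, f (x i) • xs i) (x k) = 0 := by
  simpa using h.dual.apply_sub_sum f hk

end IsBoundedBiorthogonalOn

end Biorthogonal

section Block

open scoped RealInnerProductSpace

variable {X : Type*} [NormedAddCommGroup X] [NormedSpace ℝ X]

theorem not_finiteDimensional_iInf_ker (hX : ¬ FiniteDimensional ℝ X)
    {Φ : Set (X →L[ℝ] ℝ)} (hΦ : Φ.Finite) :
    ¬ FiniteDimensional ℝ ↥(⨅ φ : Φ, LinearMap.ker (φ : X →L[ℝ] ℝ).toLinearMap) := by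
  intro h
  have := hΦ.to_subtype
  let g : X →ₗ[ℝ] (Φ → ℝ) := LinearMap.pi fun φ => (φ : X →L[ℝ] ℝ).toLinearMap
  rw [← LinearMap.ker_pi] at h
  have : FiniteDimensional ℝ (X ⧸ LinearMap.ker g) :=
    LinearEquiv.finiteDimensional g.quotKerEquivRange.symm
  exact hX (Module.Finite.of_submodule_quotient (LinearMap.ker g))

theorem exists_strongDual_comp_eq {W : Type*} [AddCommGroup W] [Module ℝ W] (T : W →ₗ[ℝ] X)
    (p : W →ₗ[ℝ] ℝ) {c : ℝ} (hc : 0 ≤ c) (hp : ∀ w, ‖p w‖ ≤ c * ‖T w‖) :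
    ∃ f : X →L[ℝ] ℝ, ‖f‖ ≤ c ∧ ∀ w, f (T w) = p w := by
  obtain ⟨S, hS⟩ := T.rangeRestrict.exists_rightInverse_of_surjective T.range_rangeRestrict
  have hTS : ∀ g, T (S g) = g := fun g => congrArg Subtype.val (LinearMap.congr_fun hS g)
  obtain ⟨f, hf, hfn⟩ := exists_extension_norm_eq (LinearMap.range T)
    ((p ∘ₗ S).mkContinuous c fun g => by simpa [hTS] using hp (S g))
  refine ⟨f, hfn.trans_le (LinearMap.mkContinuous_norm_le _ hc _), fun w => ?_⟩
  have hker : p (S (T.rangeRestrict w) - w) = 0 := by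
    simpa [hTS] using hp (S (T.rangeRestrict w) - w)
  rw [map_sub, sub_eq_zero] at hker
  exact (hf (T.rangeRestrict w)).trans hker

theorem exists_strongDual_eq_inner {V : Type*} [NormedAddCommGroup V] [InnerProductSpace ℝ V]
    {H : Submodule ℝ X} {u : V →ₗ[ℝ] X} {r : ℝ} (hr : 0 ≤ r)
    (hu : ∀ t, ∀ h ∈ H, ‖t‖ ≤ r * ‖h + u t‖) (b : V) :
    ∃ f : X →L[ℝ] ℝ, ‖f‖ ≤ r * ‖b‖ ∧ (∀ h ∈ H, f h = 0) ∧ ∀ t, f (u t) = ⟪b, t⟫ := by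
  obtain ⟨f, hf, hfT⟩ := exists_strongDual_comp_eq (H.subtype.coprod u)
    (innerₗ V b ∘ₗ LinearMap.snd ℝ H V) (c := r * ‖b‖) (by positivity) fun w => by
      calc ‖⟪b, w.2⟫‖ ≤ ‖b‖ * ‖w.2‖ := norm_inner_le_norm _ _
        _ ≤ ‖b‖ * (r * ‖(w.1 : X) + u w.2‖) := by
          gcongr
          exact hu w.2 w.1 w.1.2
        _ = r * ‖b‖ * ‖H.subtype.coprod u w‖ := by
          simp only [LinearMap.coprod_apply, Submodule.subtype_apply]
          ring
  exact ⟨f, hf, fun h hh => by simpa using hfT (⟨h, hh⟩, 0), fun t => by simpa using hfT (0, t)⟩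

section TangentFrame

variable {ι V : Type*} [NormedAddCommGroup V] [InnerProductSpace ℝ V]

/-- The components of the vectors `e i` orthogonal to `∑ j ∈ t, a j • e j`, when `(e i)` is
orthonormal on `t` and this combination is a unit vector. -/
def tangentFrame (t : Finset ι) (a : ι → ℝ) (e : ι → V) (i : ι) : V :=
  e i - a i • ∑ j ∈ t, a j • e j

variable [DecidableEq ι] {t : Finset ι} {a : ι → ℝ} {e : ι → V}
  (he : ∀ i ∈ t, ∀ j ∈ t, ⟪e i, e j⟫ = if i = j then 1 else 0) (ha : ∑ i ∈ t, a i ^ 2 = 1)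
include he ha

theorem inner_tangentFrame {i j : ι} (hi : i ∈ t) (hj : j ∈ t) :
    ⟪tangentFrame t a e i, tangentFrame t a e j⟫ = (if i = j then 1 else 0) - a i * a j := by
  have hright : ∀ k ∈ t, ⟪e k, ∑ j ∈ t, a j • e j⟫ = a k := fun k hk => by
    simp only [inner_sum, inner_smul_right]
    rw [Finset.sum_congr rfl fun j hj => by rw [he k hk j hj]]
    simp [hk]
  have hleft : ⟪∑ j ∈ t, a j • e j, e j⟫ = a j := by rw [real_inner_comm, hright j hj]
  have hself : ⟪∑ j ∈ t, a j • e j, ∑ j ∈ t, a j • e j⟫ = 1 := by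
    rw [sum_inner, ← ha]
    refine Finset.sum_congr rfl fun k hk => ?_
    rw [real_inner_smul_left, hright k hk, sq]
  simp only [tangentFrame, inner_sub_left, inner_sub_right, real_inner_smul_left,
    inner_smul_right, he i hi j hj, hright i hi, hleft, hself]
  ring

theorem norm_tangentFrame_le_one {i : ι} (hi : i ∈ t) : ‖tangentFrame t a e i‖ ≤ 1 := by
  have h := inner_tangentFrame he ha hi hi
  rw [real_inner_self_eq_norm_sq, if_pos rfl] at h
  nlinarith [norm_nonneg (tangentFrame t a e i), mul_self_nonneg (a i)]

theorem norm_sq_sum_smul_tangentFrame {A : Finset ι} (hA : A ⊆ t) :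
    ‖∑ i ∈ A, a i • tangentFrame t a e i‖ ^ 2 =
      ∑ i ∈ A, a i ^ 2 - (∑ i ∈ A, a i ^ 2) ^ 2 := by
  rw [← real_inner_self_eq_norm_sq, sum_inner, sq (∑ i ∈ A, a i ^ 2), Finset.sum_mul,
    ← Finset.sum_sub_distrib]
  refine Finset.sum_congr rfl fun i hi => ?_
  calc ⟪a i • tangentFrame t a e i, ∑ j ∈ A, a j • tangentFrame t a e j⟫
      = ∑ j ∈ A, (a i * (a j * if i = j then 1 else 0) - a i ^ 2 * a j ^ 2) := by
        rw [inner_sum]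
        refine Finset.sum_congr rfl fun j hj => ?_
        rw [real_inner_smul_left, inner_smul_right,
          inner_tangentFrame he ha (hA hi) (hA hj)]
        ring
    _ = a i ^ 2 - a i ^ 2 * ∑ j ∈ A, a j ^ 2 := by
        rw [Finset.sum_sub_distrib, ← Finset.mul_sum, ← Finset.mul_sum]
        simp [hi, sq]

theorem sum_smul_tangentFrame_eq_zero : ∑ i ∈ t, a i • tangentFrame t a e i = 0 := by
  have h := norm_sq_sum_smul_tangentFrame he ha subset_rfl
  rw [ha] at h
  exact norm_eq_zero.1 (pow_eq_zero_iff two_ne_zero |>.1 (h.trans (by norm_num)))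

end TangentFrame

theorem exists_inner_eq_ite {ι : Type*} [DecidableEq ι] (t : Finset ι) :
    ∃ e : ι → EuclideanSpace ℝ t, ∀ i ∈ t, ∀ j ∈ t, ⟪e i, e j⟫ = if i = j then 1 else 0 := by
  refine ⟨fun i => WithLp.toLp 2 fun k => if i = k then 1 else 0, fun i hi j _ => ?_⟩
  simp only [EuclideanSpace.inner_toLp_toLp, dotProduct, star_trivial, mul_ite, mul_one, mul_zero]
  rw [Finset.sum_coe_sort t fun k => if i = k then if j = k then (1 : ℝ) else 0 else 0]
  simp [hi, eq_comm]

theorem norm_smul_add_le {E : Type*} [SeminormedAddCommGroup E] [NormedSpace ℝ E] {a η : ℝ}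
    {v w : E} (hv : |a| * ‖v‖ ≤ η) (hw : ‖w‖ ≤ 1 + η) : ‖a • v + w‖ ≤ 1 + 2 * η := by
  have := norm_add_le (a • v) w
  rw [norm_smul, Real.norm_eq_abs] at this
  linarith

theorem norm_smul_add_mul_norm_smul_add_lt {E E' : Type*} [SeminormedAddCommGroup E]
    [NormedSpace ℝ E] [SeminormedAddCommGroup E'] [NormedSpace ℝ E'] {a ε : ℝ} (hε : 0 < ε)
    (hε1 : ε ≤ 1) {v w : E} {v' w' : E'} (hv : |a| * ‖v‖ ≤ ε / 8) (hw : ‖w‖ ≤ 1 + ε / 8)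
    (hv' : |a| * ‖v'‖ ≤ ε / 8) (hw' : ‖w'‖ ≤ 1 + ε / 8) :
    ‖a • v + w‖ * ‖a • v' + w'‖ < 1 + ε := by
  calc ‖a • v + w‖ * ‖a • v' + w'‖ ≤ (1 + 2 * (ε / 8)) * (1 + 2 * (ε / 8)) := by
        gcongr
        exacts [norm_smul_add_le hv hw, norm_smul_add_le hv' hw']
    _ < 1 + ε := by nlinarith

theorem exists_pos_le_one_forall_le {ι : Type*} (t : Finset ι) {f : ι → ℝ}
    (hf : ∀ i ∈ t, 0 < f i) : ∃ δ > 0, δ ≤ 1 ∧ ∀ i ∈ t, δ ≤ f i := by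
  rcases t.eq_empty_or_nonempty with rfl | ht
  · exact ⟨1, one_pos, le_rfl, by simp⟩
  obtain ⟨k, hk, hmin⟩ := t.exists_min_image f ht
  exact ⟨min (f k) 1, lt_min (hf k hk) one_pos, min_le_right _ _,
    fun i hi => (min_le_left _ _).trans (hmin i hi)⟩

theorem half_mul_sub_sq_le {s r c : ℝ} (hr : 0 ≤ r) (hrs : r ^ 2 = s - s ^ 2) (hrc : r ≤ 2 * c) :
    1 / 2 * (s - s ^ 2) ≤ c := by
  have hr1 : r ≤ 1 := by nlinarith [sq_nonneg (s - 1 / 2)]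
  nlinarith

theorem exists_almost_orthogonal_copy (hX : ¬ FiniteDimensional ℝ X) {F : Set X} (hF : F.Finite)
    {Φ : Set (X →L[ℝ] ℝ)} (hΦ : Φ.Finite) (V : Type*) [NormedAddCommGroup V]
    [InnerProductSpace ℝ V] [FiniteDimensional ℝ V] {δ : ℝ} (hδ : 0 < δ) :
    ∃ (u : V →ₗ[ℝ] X) (f : V → X →L[ℝ] ℝ), (∀ φ ∈ Φ, ∀ v, φ (u v) = 0) ∧
      (∀ b, ∀ w ∈ F, f b w = 0) ∧ (∀ b v, f b (u v) = ⟪b, v⟫) ∧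
      (∀ v, ‖u v‖ ≤ (1 + δ) * ‖v‖) ∧ (∀ b, ‖f b‖ ≤ (1 + δ) * ‖b‖) ∧
      ∀ v, ∀ h ∈ Submodule.span ℝ F, ‖v‖ ≤ (1 + δ) * ‖h + u v‖ := by
  have := FiniteDimensional.span_of_finite ℝ hF
  obtain ⟨u, huΦ, hu, huF⟩ := exists_almost_isometry_almost_orthogonal V
    (not_finiteDimensional_iInf_ker hX hΦ) (Submodule.span ℝ F) hδ
  choose f hf hfF hfu using exists_strongDual_eq_inner (by positivity) huF
  exact ⟨u, f, fun φ hφ v => (Submodule.mem_iInf _).1 (huΦ v) ⟨φ, hφ⟩,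
    fun b w hw => hfF b w (Submodule.subset_span hw), hfu, hu, hf, huF⟩

/-- The block consists of multiples of `x₀` perturbed by a tangent frame in an almost orthogonal
Euclidean copy; the perturbation cancels in the full sum only. -/
theorem exists_biorthogonal_block (hX : ¬ FiniteDimensional ℝ X) {F : Set X} (hF : F.Finite)
    {Φ : Set (X →L[ℝ] ℝ)} (hΦ : Φ.Finite) {x₀ : X} {φ₀ : X →L[ℝ] ℝ} (hφx : φ₀ x₀ = 1)
    (hx₀ : ∀ φ ∈ Φ, φ x₀ = 0) (hφ₀ : ∀ w ∈ F, φ₀ w = 0) {ι : Type*} {t : Finset ι}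
    {ε a : ι → ℝ} (hε : ∀ i ∈ t, 0 < ε i) (hε1 : ∀ i ∈ t, ε i ≤ 1)
    (ha : ∑ i ∈ t, a i ^ 2 = 1) (hax : ∀ i ∈ t, |a i| * ‖x₀‖ ≤ ε i / 8)
    (haφ : ∀ i ∈ t, |a i| * ‖φ₀‖ ≤ ε i / 8) :
    ∃ (y : ι → X) (ys : ι → X →L[ℝ] ℝ), IsBoundedBiorthogonalOn t ε y ys ∧
      (∀ φ ∈ Φ, ∀ i, φ (y i) = 0) ∧ (∀ i, ∀ w ∈ F, ys i w = 0) ∧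
      ∑ i ∈ t, a i • y i = x₀ ∧
      ∀ A ⊆ t, 1 / 2 * (∑ i ∈ A, a i ^ 2 - (∑ i ∈ A, a i ^ 2) ^ 2) ≤ ‖∑ i ∈ A, a i • y i‖ := by
  classical
  obtain ⟨δ, hδ0, hδ1, hδ⟩ :=
    exists_pos_le_one_forall_le t fun i hi => div_pos (hε i hi) (by norm_num : (0 : ℝ) < 8)
  obtain ⟨e, he⟩ := exists_inner_eq_ite t
  obtain ⟨u, f, huΦ, hfF, hfu, hu, hf, huF⟩ := exists_almost_orthogonal_copy hX (hF.insert x₀)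
    (hΦ.insert φ₀) (EuclideanSpace ℝ t) hδ0
  let q : ι → EuclideanSpace ℝ t := tangentFrame t a e
  have hq : ∀ i ∈ t, ‖q i‖ ≤ 1 := fun i hi => norm_tangentFrame_le_one he ha hi
  have happly : ∀ i ∈ t, ∀ j ∈ t,
      (a i • φ₀ + f (q i)) (a j • x₀ + u (q j)) = if i = j then 1 else 0 := fun i hi j hj => by
    simp [hφx, huΦ φ₀ (Set.mem_insert _ _), hfF _ x₀ (Set.mem_insert _ _), hfu, q,
      inner_tangentFrame he ha hi hj]
  have hsum : ∀ A : Finset ι, ∑ i ∈ A, a i • (a i • x₀ + u (q i)) =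
      (∑ i ∈ A, a i ^ 2) • x₀ + u (∑ i ∈ A, a i • q i) := fun A => by
    simp only [smul_add, Finset.sum_add_distrib, map_sum, map_smul, Finset.sum_smul, smul_smul, sq]
  refine ⟨fun i => a i • x₀ + u (q i), fun i => a i • φ₀ + f (q i),
    ⟨fun i hi => (happly i hi i hi).trans (if_pos rfl), fun i hi j hj hij =>
      (happly i hi j hj).trans (if_neg hij), fun i hi => ?_⟩, fun φ hφ i => ?_, fun i w hw => ?_,
    ?_, fun A hA => ?_⟩
  · have hδq : (1 + δ) * ‖q i‖ ≤ 1 + ε i / 8 := by nlinarith [hq i hi, hδ i hi]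
    exact norm_smul_add_mul_norm_smul_add_lt (hε i hi) (hε1 i hi) (hax i hi)
      ((hu (q i)).trans hδq) (haφ i hi) ((hf (q i)).trans hδq)
  · simp [hx₀ φ hφ, huΦ φ (Set.mem_insert_of_mem _ hφ)]
  · simp [hφ₀ w hw, hfF _ w (Set.mem_insert_of_mem _ hw)]
  · rw [hsum, ha, one_smul, sum_smul_tangentFrame_eq_zero he ha, map_zero, add_zero]
  · have hlow := huF (∑ i ∈ A, a i • q i) ((∑ i ∈ A, a i ^ 2) • x₀)
      (Submodule.smul_mem _ _ (Submodule.subset_span (Set.mem_insert x₀ F)))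
    rw [hsum]
    refine half_mul_sub_sq_le (norm_nonneg _) (norm_sq_sum_smul_tangentFrame he ha hA)
      (hlow.trans ?_)
    gcongr
    linarith

end Block

section Helly

variable {X : Type*} [NormedAddCommGroup X] [NormedSpace ℝ X]

theorem not_finiteDimensional_strongDual (hX : ¬ FiniteDimensional ℝ X) :
    ¬ FiniteDimensional ℝ (X →L[ℝ] ℝ) := fun _ =>
  hX (FiniteDimensional.of_injective
    (NormedSpace.inclusionInDoubleDualLi (E := X) ℝ).toLinearMap
    (NormedSpace.inclusionInDoubleDualLi (E := X) ℝ).injective)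

theorem exists_forall_apply_eq (W : Submodule ℝ (X →L[ℝ] ℝ)) [FiniteDimensional ℝ W]
    (G : W →ₗ[ℝ] ℝ) : ∃ x : X, ∀ φ : W, (φ : X →L[ℝ] ℝ) x = G φ := by
  let B : W →ₗ[ℝ] X →ₗ[ℝ] ℝ := ContinuousLinearMap.coeLM ℝ ∘ₗ W.subtype
  have hB : Function.Injective B :=
    ContinuousLinearMap.coe_injective.comp W.injective_subtype
  have hflip : Function.Surjective B.flip :=
    (LinearMap.flip_surjective_iff₁ (K := ℝ) (V₁ := W) (V₂ := X)).2 hB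
  obtain ⟨x, hx⟩ := hflip G
  exact ⟨x, fun φ => LinearMap.congr_fun hx φ⟩

theorem mem_span_of_iInf_ker_le {Φ : Set (X →L[ℝ] ℝ)} (hΦ : Φ.Finite) {f : X →L[ℝ] ℝ}
    (hf : ⨅ φ : Φ, LinearMap.ker (φ : X →L[ℝ] ℝ).toLinearMap ≤ LinearMap.ker f.toLinearMap) :
    f ∈ Submodule.span ℝ Φ := by
  have := hΦ.fintype
  obtain ⟨c, hc⟩ := (Submodule.mem_span_range_iff_exists_fun ℝ).1 (mem_span_of_iInf_ker_le_ker hf)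
  have hsum : f = ∑ φ : Φ, c φ • (φ : X →L[ℝ] ℝ) := by
    ext x
    simpa using (LinearMap.congr_fun hc x).symm
  rw [hsum]
  exact Submodule.sum_mem _ fun φ _ => Submodule.smul_mem _ _ (Submodule.subset_span φ.2)

theorem exists_strongDual_eq_norm_mk (N : Submodule ℝ X) (x : X) :
    ∃ f : X →L[ℝ] ℝ, ‖f‖ ≤ 1 ∧ N ≤ LinearMap.ker f.toLinearMap ∧
      f x = ‖(Submodule.Quotient.mk x : X ⧸ N)‖ := by
  obtain ⟨g, hg, hgx⟩ := exists_dual_vector'' ℝ (Submodule.Quotient.mk x : X ⧸ N)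
  have hbound : ∀ v : X, ‖(g.toLinearMap ∘ₗ N.mkQ) v‖ ≤ 1 * ‖v‖ := fun v =>
    (g.le_of_opNorm_le hg _).trans (by gcongr; exact Submodule.Quotient.norm_mk_le N v)
  refine ⟨(g.toLinearMap ∘ₗ N.mkQ).mkContinuous 1 hbound,
    LinearMap.mkContinuous_norm_le _ zero_le_one _, fun n hn => ?_, hgx⟩
  change g (N.mkQ n) = 0
  rw [Submodule.mkQ_apply, (Submodule.Quotient.mk_eq_zero N).2 hn, map_zero]

/-- **Helly's theorem**. -/
theorem exists_apply_eq_bidual_apply {Φ : Set (X →L[ℝ] ℝ)} (hΦ : Φ.Finite)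
    (G : (X →L[ℝ] ℝ) →L[ℝ] ℝ) {r : ℝ} (hr : ‖G‖ < r) :
    ∃ x : X, (∀ φ ∈ Φ, φ x = G φ) ∧ ‖x‖ < r := by
  let N : Submodule ℝ X := ⨅ φ : Φ, LinearMap.ker (φ : X →L[ℝ] ℝ).toLinearMap
  have := FiniteDimensional.span_of_finite ℝ hΦ
  obtain ⟨x₀, hx₀⟩ := exists_forall_apply_eq (Submodule.span ℝ Φ)
    (G.toLinearMap ∘ₗ (Submodule.span ℝ Φ).subtype)
  obtain ⟨f, hf, hfN, hfx⟩ := exists_strongDual_eq_norm_mk N x₀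
  have hlt : ‖(Submodule.Quotient.mk x₀ : X ⧸ N)‖ < r := by
    calc ‖(Submodule.Quotient.mk x₀ : X ⧸ N)‖
        = G f := by rw [← hfx]; exact hx₀ ⟨f, mem_span_of_iInf_ker_le hΦ hfN⟩
      _ ≤ ‖G‖ * ‖f‖ := (le_abs_self _).trans (G.le_opNorm f)
      _ ≤ ‖G‖ := mul_le_of_le_one_right (norm_nonneg G) hf
      _ < r := hr
  obtain ⟨x, hx, hxn⟩ := Submodule.Quotient.norm_mk_lt (Submodule.Quotient.mk x₀ : X ⧸ N)
    (sub_pos.2 hlt)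
  refine ⟨x, fun φ hφ => ?_, by linarith⟩
  have hker : φ (x - x₀) = 0 :=
    (Submodule.mem_iInf _).1 ((Submodule.Quotient.eq N).1 hx) ⟨φ, hφ⟩
  rw [map_sub, sub_eq_zero] at hker
  exact hker.trans (hx₀ ⟨φ, Submodule.subset_span hφ⟩)

theorem IsBoundedBiorthogonalOn.exists_predual {ι : Type*} {t : Finset ι} {ε : ι → ℝ}
    {f : ι → X →L[ℝ] ℝ} {G : ι → (X →L[ℝ] ℝ) →L[ℝ] ℝ} (h : IsBoundedBiorthogonalOn t ε f G)
    {Φ : Set (X →L[ℝ] ℝ)} (hΦ : Φ.Finite) :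
    ∃ z : ι → X, IsBoundedBiorthogonalOn t ε z f ∧ ∀ i ∈ t, ∀ φ ∈ Φ, φ (z i) = G i φ := by
  have hpos : ∀ i ∈ t, 0 < ‖f i‖ := fun i hi => norm_pos_iff.2 fun h0 => by
    simpa [h0] using h.apply_self i hi
  have hz : ∀ i, ∃ z : X, i ∈ t →
      (∀ φ ∈ Φ ∪ f '' t, φ z = G i φ) ∧ ‖z‖ * ‖f i‖ < 1 + ε i := fun i => by
    by_cases hi : i ∈ t
    · have hG : ‖G i‖ < (1 + ε i) / ‖f i‖ := by
        rw [lt_div_iff₀ (hpos i hi), mul_comm]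
        exact h.norm_mul_lt i hi
      obtain ⟨z, hz, hzn⟩ := exists_apply_eq_bidual_apply (hΦ.union (t.finite_toSet.image f))
        (G i) hG
      exact ⟨z, fun _ => ⟨hz, (lt_div_iff₀ (hpos i hi)).1 hzn⟩⟩
    · exact ⟨0, fun hi' => absurd hi' hi⟩
  choose z hz using hz
  have hfz : ∀ i ∈ t, ∀ j ∈ t, f i (z j) = G j (f i) := fun i hi j hj =>
    (hz j hj).1 _ (Or.inr ⟨i, hi, rfl⟩)
  exact ⟨z, ⟨fun i hi => (hfz i hi i hi).trans (h.apply_self i hi),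
    fun i hi j hj hij => (hfz i hi j hj).trans (h.apply_of_ne j hj i hi hij.symm),
    fun i hi => (hz i hi).2⟩, fun i hi φ hφ => (hz i hi).1 φ (Or.inl hφ)⟩

end Helly

section FlatSums

variable {ι X : Type*} [NormedAddCommGroup X] [NormedSpace ℝ X]

/-- The sequence `y` has partial-sum constant at most `C`; for a Schauder basis this holds with its
basis constant. -/
def HasPartialSumBound (C : ℝ) (y : ℕ → X) : Prop :=
  ∀ m n : ℕ, m ≤ n → ∀ a : ℕ → ℝ,
    ‖∑ i ∈ Finset.range m, a i • y i‖ ≤ C * ‖∑ i ∈ Finset.range n, a i • y i‖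

/-- Coefficients `a` witnessing that `x` is conditional in every order: the full sum over `s` has
norm at most `τ`, but every sub-sum carrying a balanced part of `∑ i ∈ s, a i ^ 2 = 1` is large. -/
structure HasFlatSums (τ : ℝ) (s : Finset ι) (a : ι → ℝ) (x : ι → X) : Prop where
  sum_sq : ∑ i ∈ s, a i ^ 2 = 1
  sq_le : ∀ i ∈ s, a i ^ 2 ≤ 1 / 2
  norm_sum_le : ‖∑ i ∈ s, a i • x i‖ ≤ τ
  le_norm_sum : ∀ A ⊆ s,
    1 / 2 * (∑ i ∈ A, a i ^ 2 - (∑ i ∈ A, a i ^ 2) ^ 2) ≤ ‖∑ i ∈ A, a i • x i‖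

theorem exists_sum_range_mem_Icc {b : ℕ → ℝ} (hb : ∀ i, b i ≤ 1 / 2) {N : ℕ}
    (hN : ∑ i ∈ Finset.range N, b i = 1) :
    ∃ m ≤ N, ∑ i ∈ Finset.range m, b i ∈ Set.Icc (1 / 4) (3 / 4) := by
  classical
  have hex : ∃ m, 1 / 4 ≤ ∑ i ∈ Finset.range m, b i := ⟨N, by rw [hN]; norm_num⟩
  refine ⟨Nat.find hex, Nat.find_min' hex (by rw [hN]; norm_num), Nat.find_spec hex, ?_⟩
  obtain ⟨k, hk⟩ : ∃ k, Nat.find hex = k + 1 := Nat.exists_eq_succ_of_ne_zero fun h0 => by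
    have := Nat.find_spec hex
    rw [h0] at this
    norm_num at this
  have hlt := Nat.find_min hex (m := k) (by omega)
  rw [hk, Finset.sum_range_succ]
  linarith [hb k]

namespace HasFlatSums

variable {τ : ℝ} {s : Finset ι} {a : ι → ℝ} {x y : ι → X}

theorem congr (h : HasFlatSums τ s a x) (hxy : Set.EqOn x y s) : HasFlatSums τ s a y := by
  have hsum : ∀ A ⊆ s, ∑ i ∈ A, a i • y i = ∑ i ∈ A, a i • x i := fun A hA =>
    Finset.sum_congr rfl fun i hi => by rw [hxy (hA hi)]
  refine ⟨h.sum_sq, h.sq_le, ?_, fun A hA => ?_⟩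
  · rw [hsum s subset_rfl]
    exact h.norm_sum_le
  · rw [hsum A hA]
    exact h.le_norm_sum A hA

theorem comp_equiv {κ : Type*} (h : HasFlatSums τ s a x) (e : κ ≃ ι) :
    HasFlatSums τ (s.map e.symm.toEmbedding) (a ∘ e) (x ∘ e) := by
  have hsq : ∀ A : Finset κ, ∑ k ∈ A, (a ∘ e) k ^ 2 = ∑ i ∈ A.map e.toEmbedding, a i ^ 2 :=
    fun A => by simp
  have hsum : ∀ A : Finset κ,
      ∑ k ∈ A, (a ∘ e) k • (x ∘ e) k = ∑ i ∈ A.map e.toEmbedding, a i • x i := fun A => by simp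
  have hs : (s.map e.symm.toEmbedding).map e.toEmbedding = s := by
    ext i
    simp
  refine ⟨?_, fun k hk => h.sq_le _ (by simpa using hk), ?_, fun A hA => ?_⟩
  · rw [hsq, hs, h.sum_sq]
  · rw [hsum, hs]
    exact h.norm_sum_le
  · rw [hsq, hsum]
    refine h.le_norm_sum _ ?_
    rw [← hs]
    exact Finset.map_subset_map.2 hA

theorem le_mul_of_hasPartialSumBound {s : Finset ℕ} {a : ℕ → ℝ} {x : ℕ → X}
    (h : HasFlatSums τ s a x) {C : ℝ} (hC0 : 0 ≤ C) (hC : HasPartialSumBound C x) :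
    3 / 32 ≤ C * τ := by
  let b : ℕ → ℝ := fun i => if i ∈ s then a i else 0
  have hsq : ∀ m, ∑ i ∈ Finset.range m, b i ^ 2 = ∑ i ∈ Finset.range m ∩ s, a i ^ 2 :=
    fun m => by simp [b, ite_pow, Finset.sum_ite_mem]
  have hsum : ∀ m, ∑ i ∈ Finset.range m, b i • x i = ∑ i ∈ Finset.range m ∩ s, a i • x i :=
    fun m => by simp [b, ite_smul, Finset.sum_ite_mem]
  have hb : ∀ i, b i ^ 2 ≤ 1 / 2 := fun i => by
    by_cases hi : i ∈ s
    · simpa [b, hi] using h.sq_le i hi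
    · simp [b, hi]
  obtain ⟨N, hN⟩ := s.exists_nat_subset_range
  have hNs : Finset.range N ∩ s = s := Finset.inter_eq_right.2 hN
  obtain ⟨m, hm, hlo, hhi⟩ := exists_sum_range_mem_Icc hb (N := N) (by rw [hsq, hNs, h.sum_sq])
  have hpartial := hC m N hm b
  rw [hsum, hsum, hNs] at hpartial
  have hbalanced := h.le_norm_sum (Finset.range m ∩ s) Finset.inter_subset_right
  rw [← hsq] at hbalanced
  have hfull := mul_le_mul_of_nonneg_left h.norm_sum_le hC0
  nlinarith

theorem le_abs_mul_of_hasPartialSumBound_comp {s : Finset ℕ} {a : ℕ → ℝ} {x : ℕ → X}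
    (h : HasFlatSums τ s a x) (σ : Equiv.Perm ℕ) {C : ℝ} (hC : HasPartialSumBound C (x ∘ σ)) :
    3 / 32 ≤ |C| * τ :=
  (h.comp_equiv σ).le_mul_of_hasPartialSumBound (abs_nonneg C) fun m n hmn b =>
    (hC m n hmn b).trans (by gcongr; exact le_abs_self C)

end HasFlatSums

theorem not_hasPartialSumBound_comp_of_hasFlatSums {x : ℕ → X} {τ : ℕ → ℝ}
    (hτ : Filter.Tendsto τ Filter.atTop (nhds 0)) (h : ∀ j, ∃ s a, HasFlatSums (τ j) s a x)
    (σ : Equiv.Perm ℕ) (C : ℝ) : ¬ HasPartialSumBound C (x ∘ σ) := by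
  intro hC
  have hle : ∀ j, 3 / 32 ≤ |C| * τ j := fun j => by
    obtain ⟨s, a, hflat⟩ := h j
    exact hflat.le_abs_mul_of_hasPartialSumBound_comp σ hC
  have hlim := ge_of_tendsto' (hτ.const_mul |C|) hle
  norm_num at hlim

end FlatSums

section Extension

theorem exists_le_sum_sq_Ico {ε : ℕ → ℝ} (hsq : ¬ Summable fun n => ε n ^ 2) (n : ℕ) (M : ℝ) :
    ∃ n', n < n' ∧ M ≤ ∑ i ∈ Finset.Ico n n', ε i ^ 2 := by
  have hlim := (not_summable_iff_tendsto_nat_atTop_of_nonneg fun i => sq_nonneg (ε i)).1 hsq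
  obtain ⟨n', hM, hn'⟩ := ((hlim.eventually_ge_atTop (M + ∑ i ∈ Finset.range n, ε i ^ 2)).and
    (Filter.eventually_gt_atTop n)).exists
  refine ⟨n', hn', ?_⟩
  rw [Finset.sum_Ico_eq_sub _ hn'.le]
  linarith

theorem exists_flat_coefficients {ε : ℕ → ℝ} (hε : ∀ i, 0 < ε i) (hε1 : ∀ i, ε i ≤ 1)
    (hsq : ¬ Summable fun n => ε n ^ 2) (n : ℕ) (M : ℝ) :
    ∃ n', n < n' ∧ ∃ a : ℕ → ℝ, ∑ i ∈ Finset.Ico n n', a i ^ 2 = 1 ∧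
      ∀ i, |a i| * M ≤ ε i / 8 ∧ a i ^ 2 ≤ 1 / 2 := by
  obtain ⟨n', hn', hsum⟩ := exists_le_sum_sq_Ico hsq n ((8 * (|M| + 1)) ^ 2)
  let R := √(∑ i ∈ Finset.Ico n n', ε i ^ 2)
  have hM : 0 ≤ |M| := abs_nonneg M
  have hR : 8 * (|M| + 1) ≤ R := Real.le_sqrt_of_sq_le hsum
  have hR0 : 0 < R := by linarith
  have hRsq : R ^ 2 = ∑ i ∈ Finset.Ico n n', ε i ^ 2 := Real.sq_sqrt (by positivity)
  refine ⟨n', hn', fun i => ε i / R, ?_, fun i => ⟨?_, ?_⟩⟩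
  · simp only [div_pow]
    rw [← Finset.sum_div, ← hRsq, div_self (by positivity)]
  · rw [abs_of_pos (div_pos (hε i) hR0), div_mul_eq_mul_div, div_le_iff₀ hR0]
    nlinarith [hε i, le_abs_self M]
  · rw [div_pow, div_le_iff₀ (by positivity)]
    nlinarith [hε i, hε1 i]

theorem not_summable_min_one_sq {ε : ℕ → ℝ} (hsq : ¬ Summable fun n => ε n ^ 2) :
    ¬ Summable fun n => min (ε n) 1 ^ 2 := fun h => by
  have hlt := h.tendsto_atTop_zero.eventually_lt_const (zero_lt_one' ℝ)
  refine hsq ((summable_congr_atTop ?_).1 h)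
  filter_upwards [hlt] with n hn
  rcases le_total (ε n) 1 with hε | hε
  · rw [min_eq_left hε]
  · rw [min_eq_right hε] at hn
    norm_num at hn

variable {X : Type*} [NormedAddCommGroup X] [NormedSpace ℝ X]

theorem IsBoundedBiorthogonalOn.exists_ne_zero_mem_span_insert {ι : Type*} {s : Finset ι}
    {ε : ι → ℝ} {x : ι → X} {xs : ι → X →L[ℝ] ℝ} (h : IsBoundedBiorthogonalOn s ε x xs)
    (hX : ¬ FiniteDimensional ℝ X) (v : X) :
    ∃ w : X, w ≠ 0 ∧ (∀ k ∈ s, xs k w = 0) ∧ v ∈ Submodule.span ℝ (insert w (x '' s)) := by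
  have hmem : ∀ w, ∑ i ∈ s, xs i v • x i ∈ Submodule.span ℝ (insert w (x '' s)) := fun w =>
    Submodule.sum_mem _ fun i hi => Submodule.smul_mem _ _
      (Submodule.subset_span (Set.mem_insert_of_mem _ ⟨i, hi, rfl⟩))
  by_cases h0 : v - ∑ i ∈ s, xs i v • x i = 0
  · obtain ⟨w, hw, hw0⟩ : ∃ w ∈ ⨅ φ : xs '' s, LinearMap.ker (φ : X →L[ℝ] ℝ).toLinearMap,
        w ≠ 0 := by
      refine Submodule.exists_mem_ne_zero_of_ne_bot fun hbot => ?_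
      have hfin := not_finiteDimensional_iInf_ker hX (s.finite_toSet.image xs)
      rw [hbot] at hfin
      exact hfin inferInstance
    refine ⟨w, hw0, fun k hk => (Submodule.mem_iInf _).1 hw ⟨xs k, k, hk, rfl⟩, ?_⟩
    rw [sub_eq_zero.1 h0]
    exact hmem w
  · refine ⟨_, h0, fun k hk => h.apply_sub_sum v hk, ?_⟩
    have hadd := Submodule.add_mem _ (Submodule.subset_span (R := ℝ) (Set.mem_insert _ _))
      (hmem (v - ∑ i ∈ s, xs i v • x i))
    rwa [sub_add_cancel] at hadd

theorem IsBoundedBiorthogonalOn.exists_strongDual_eq_one {ι : Type*} {s : Finset ι}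
    {ε : ι → ℝ} {x : ι → X} {xs : ι → X →L[ℝ] ℝ} (h : IsBoundedBiorthogonalOn s ε x xs) {w : X}
    (hw0 : w ≠ 0) (hw : ∀ k ∈ s, xs k w = 0) :
    ∃ f : X →L[ℝ] ℝ, f w = 1 ∧ ∀ k ∈ s, f (x k) = 0 := by
  obtain ⟨g, hg⟩ := SeparatingDual.exists_eq_one (R := ℝ) hw0
  refine ⟨g - ∑ i ∈ s, g (x i) • xs i, ?_, fun k hk => h.sub_sum_apply g hk⟩
  rw [sub_apply, sum_apply, Finset.sum_eq_zero fun i hi => ?_, hg, sub_zero]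
  rw [smul_apply, hw i hi, smul_zero]

variable {ε : ℕ → ℝ} {n : ℕ} {x : ℕ → X} {xs : ℕ → X →L[ℝ] ℝ}

theorem IsBoundedBiorthogonalOn.exists_block (h : IsBoundedBiorthogonalOn (Finset.range n) ε x xs)
    (hX : ¬ FiniteDimensional ℝ X) (hε : ∀ i, 0 < ε i) (hε1 : ∀ i, ε i ≤ 1)
    (hsq : ¬ Summable fun n => ε n ^ 2) (v : X) {τ : ℝ} (hτ : 0 < τ) :
    ∃ n' > n, ∃ (a : ℕ → ℝ) (y : ℕ → X) (ys : ℕ → X →L[ℝ] ℝ),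
      IsBoundedBiorthogonalOn (Finset.Ico n n') ε y ys ∧
      (∀ i ∈ Finset.range n, ∀ j, xs i (y j) = 0) ∧
      (∀ j, ∀ i ∈ Finset.range n, ys j (x i) = 0) ∧
      v ∈ Submodule.span ℝ (x '' Finset.range n ∪ y '' Finset.Ico n n') ∧
      HasFlatSums τ (Finset.Ico n n') a y := by
  obtain ⟨w, hw0, hw, hv⟩ := h.exists_ne_zero_mem_span_insert hX v
  have hc : τ / ‖w‖ ≠ 0 := by positivity
  let x₀ := (τ / ‖w‖) • w
  have hx₀n : ‖x₀‖ = τ := by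
    rw [norm_smul, Real.norm_of_nonneg (by positivity), div_mul_cancel₀ _ (norm_ne_zero_iff.2 hw0)]
  have hx₀ : ∀ k ∈ Finset.range n, xs k x₀ = 0 := fun k hk => by
    rw [map_smul, hw k hk, smul_zero]
  obtain ⟨φ₀, hφx, hφ₀⟩ := h.exists_strongDual_eq_one (smul_ne_zero hc hw0) hx₀
  obtain ⟨n', hn', a, ha, haM⟩ := exists_flat_coefficients hε hε1 hsq n (max ‖x₀‖ ‖φ₀‖)
  obtain ⟨y, ys, hy, hxy, hyx, hsum, hflat⟩ := exists_biorthogonal_block hX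
    ((Finset.range n).finite_toSet.image x) ((Finset.range n).finite_toSet.image xs) hφx
    (Set.forall_mem_image.2 hx₀) (Set.forall_mem_image.2 hφ₀) (fun i _ => hε i)
    (fun i _ => hε1 i) ha
    (fun i _ => le_trans (by gcongr; exact le_max_left _ _) (haM i).1)
    (fun i _ => le_trans (by gcongr; exact le_max_right _ _) (haM i).1)
  refine ⟨n', hn', a, y, ys, hy, fun i hi => hxy _ ⟨i, hi, rfl⟩, fun j i hi => hyx j _ ⟨i, hi, rfl⟩,
    ?_, ha, fun i _ => (haM i).2, by rw [hsum, hx₀n], hflat⟩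
  have hw : w = (τ / ‖w‖)⁻¹ • ∑ i ∈ Finset.Ico n n', a i • y i := by
    rw [hsum, inv_smul_smul₀ hc]
  refine Submodule.span_le.2 (Set.insert_subset ?_ ?_) hv
  · rw [hw]
    exact Submodule.smul_mem _ _ (Submodule.sum_mem _ fun i hi => Submodule.smul_mem _ _
      (Submodule.subset_span (Or.inr ⟨i, hi, rfl⟩)))
  · exact Set.subset_union_left.trans Submodule.subset_span

end Extension

section Limit

theorem exists_seq_of_extension {α : Type*} {P : ℕ → (ℕ → α) → Prop}
    {Q : ℕ → ℕ → (ℕ → α) → Prop} {z₀ : ℕ → α} (h₀ : P 0 z₀)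
    (hstep : ∀ j n z, P n z →
      ∃ n' > n, ∃ z', Set.EqOn z' z (Set.Iio n) ∧ P n' z' ∧ Q j n' z') :
    ∃ z : ℕ → α, ∀ j, ∃ n ≥ j, ∃ z', Set.EqOn z z' (Set.Iio n) ∧ P n z' ∧ Q j n z' := by
  choose! N hN Z hZ hP hQ using hstep
  let S : ℕ → ℕ × (ℕ → α) := Nat.rec (0, z₀) fun j s => (N j s.1 s.2, Z j s.1 s.2)
  have hS : ∀ j, P (S j).1 (S j).2 := fun j => by
    induction j with
    | zero => exact h₀
    | succ j ih => exact hP j _ _ ih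
  have hmono : StrictMono fun j => (S j).1 := strictMono_nat_of_lt_succ fun j => hN j _ _ (hS j)
  have hagree : ∀ j k, j ≤ k → Set.EqOn (S k).2 (S j).2 (Set.Iio (S j).1) := by
    intro j k hjk
    induction k, hjk using Nat.le_induction with
    | base => exact Set.eqOn_refl _ _
    | succ k hjk ih =>
      exact ((hZ k _ _ (hS k)).mono (Set.Iio_subset_Iio (hmono.monotone hjk))).trans ih
  refine ⟨fun i => (S (i + 1)).2 i, fun j => ⟨(S (j + 1)).1, j.le_succ.trans hmono.le_apply,
    (S (j + 1)).2, fun i hi => ?_, hS (j + 1), hQ j _ _ (hS j)⟩⟩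
  rcases le_total (j + 1) (i + 1) with hij | hij
  · exact hagree _ _ hij hi
  · exact (hagree _ _ hij (hmono.le_apply (x := i + 1))).symm

theorem image_piecewise_union {ι α : Type*} [DecidableEq ι] {s t : Finset ι}
    (hst : Disjoint s t) (f g : ι → α) :
    s.piecewise f g '' ((s ∪ t : Finset ι) : Set ι) = f '' s ∪ g '' t := by
  rw [Finset.coe_union, Set.image_union]
  refine congrArg₂ _ (Set.image_congr fun i hi => s.piecewise_eq_of_mem f g hi)
    (Set.image_congr fun i hi => s.piecewise_eq_of_notMem f g fun his => ?_)
  exact Finset.disjoint_left.1 hst his hi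

theorem range_union_Ico {n n' : ℕ} (hn : n ≤ n') :
    Finset.range n ∪ Finset.Ico n n' = Finset.range n' := by
  rw [Finset.range_eq_Ico, Finset.range_eq_Ico, Finset.Ico_union_Ico_eq_Ico n.zero_le hn]

theorem disjoint_range_Ico (n n' : ℕ) : Disjoint (Finset.range n) (Finset.Ico n n') := by
  rw [Finset.range_eq_Ico]
  exact Finset.Ico_disjoint_Ico_consecutive 0 n n'

variable {X : Type*} [NormedAddCommGroup X] [NormedSpace ℝ X]
variable {ε : ℕ → ℝ} {n : ℕ} {x : ℕ → X} {xs : ℕ → X →L[ℝ] ℝ}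

namespace IsBoundedBiorthogonalOn

theorem exists_extension_mem_span (h : IsBoundedBiorthogonalOn (Finset.range n) ε x xs)
    (hX : ¬ FiniteDimensional ℝ X) (hε : ∀ i, 0 < ε i) (hε1 : ∀ i, ε i ≤ 1)
    (hsq : ¬ Summable fun n => ε n ^ 2) (v : X) {τ : ℝ} (hτ : 0 < τ) :
    ∃ n' > n, ∃ (z : ℕ → X) (zs : ℕ → X →L[ℝ] ℝ), Set.EqOn z x (Finset.range n) ∧
      Set.EqOn zs xs (Finset.range n) ∧ IsBoundedBiorthogonalOn (Finset.range n') ε z zs ∧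
      v ∈ Submodule.span ℝ (z '' Finset.range n') ∧
      ∃ s ⊆ Finset.range n', ∃ a, HasFlatSums τ s a z := by
  obtain ⟨n', hn, a, y, ys, hy, hxy, hyx, hv, hflat⟩ := h.exists_block hX hε hε1 hsq v hτ
  have hunion := range_union_Ico hn.le
  have hdisj := disjoint_range_Ico n n'
  refine ⟨n', hn, (Finset.range n).piecewise x y, (Finset.range n).piecewise xs ys,
    fun i hi => Finset.piecewise_eq_of_mem _ _ _ hi,
    fun i hi => Finset.piecewise_eq_of_mem _ _ _ hi, ?_, ?_, Finset.Ico n n',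
    hunion ▸ Finset.subset_union_right, a, hflat.congr fun i hi =>
      (Finset.piecewise_eq_of_notMem _ _ _ fun hin => Finset.disjoint_left.1 hdisj hin hi).symm⟩
  · rw [← hunion]
    exact h.piecewise hy hdisj (fun i hi j _ => hxy i hi j) fun i _ j hj => hyx i j hj
  · rwa [← hunion, image_piecewise_union hdisj]

theorem exists_extension_dual_mem_span (h : IsBoundedBiorthogonalOn (Finset.range n) ε x xs)
    (hX : ¬ FiniteDimensional ℝ X) (hε : ∀ i, 0 < ε i) (hε1 : ∀ i, ε i ≤ 1)
    (hsq : ¬ Summable fun n => ε n ^ 2) (f : X →L[ℝ] ℝ) :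
    ∃ n' > n, ∃ (z : ℕ → X) (zs : ℕ → X →L[ℝ] ℝ), Set.EqOn z x (Finset.range n) ∧
      Set.EqOn zs xs (Finset.range n) ∧ IsBoundedBiorthogonalOn (Finset.range n') ε z zs ∧
      f ∈ Submodule.span ℝ (zs '' Finset.range n') := by
  obtain ⟨n', hn, -, ys, G, hG, hyx, hGxs, hf, -⟩ :=
    h.dual.exists_block (not_finiteDimensional_strongDual hX) hε hε1 hsq f one_pos
  obtain ⟨y, hy, hyG⟩ := hG.exists_predual ((Finset.range n).finite_toSet.image xs)
  have hunion := range_union_Ico hn.le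
  have hdisj := disjoint_range_Ico n n'
  refine ⟨n', hn, (Finset.range n).piecewise x y, (Finset.range n).piecewise xs ys,
    fun i hi => Finset.piecewise_eq_of_mem _ _ _ hi,
    fun i hi => Finset.piecewise_eq_of_mem _ _ _ hi, ?_, ?_⟩
  · rw [← hunion]
    exact h.piecewise hy hdisj (fun i hi j hj => (hyG j hj _ ⟨i, hi, rfl⟩).trans (hGxs j i hi))
      fun i _ j hj => hyx j hj i
  · rwa [← hunion, image_piecewise_union hdisj]

theorem exists_extension (h : IsBoundedBiorthogonalOn (Finset.range n) ε x xs)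
    (hX : ¬ FiniteDimensional ℝ X) (hε : ∀ i, 0 < ε i) (hε1 : ∀ i, ε i ≤ 1)
    (hsq : ¬ Summable fun n => ε n ^ 2) (v : X) (f : X →L[ℝ] ℝ) {τ : ℝ} (hτ : 0 < τ) :
    ∃ n' > n, ∃ (z : ℕ → X) (zs : ℕ → X →L[ℝ] ℝ), Set.EqOn z x (Finset.range n) ∧
      Set.EqOn zs xs (Finset.range n) ∧ IsBoundedBiorthogonalOn (Finset.range n') ε z zs ∧
      v ∈ Submodule.span ℝ (z '' Finset.range n') ∧
      f ∈ Submodule.span ℝ (zs '' Finset.range n') ∧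
      ∃ s ⊆ Finset.range n', ∃ a, HasFlatSums τ s a z := by
  obtain ⟨k, hk, y, ys, hyx, hysxs, hy, hv, s, hs, a, hflat⟩ :=
    h.exists_extension_mem_span hX hε hε1 hsq v hτ
  obtain ⟨n', hn', z, zs, hzy, hzsys, hz, hf⟩ :=
    hy.exists_extension_dual_mem_span hX hε hε1 hsq f
  have hnk : Finset.range n ⊆ Finset.range k := Finset.range_mono hk.le
  have hkn' : Finset.range k ⊆ Finset.range n' := Finset.range_mono hn'.le
  refine ⟨n', hk.trans hn', z, zs, (hzy.mono hnk).trans hyx, (hzsys.mono hnk).trans hysxs, hz, ?_,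
    hf, s, hs.trans hkn', a, hflat.congr (hzy.mono hs).symm⟩
  rw [← Set.image_congr hzy] at hv
  exact Submodule.span_mono (Set.image_mono hkn') hv

end IsBoundedBiorthogonalOn

theorem exists_biorthogonal_seq (hX : ¬ FiniteDimensional ℝ X) (hε : ∀ i, 0 < ε i)
    (hε1 : ∀ i, ε i ≤ 1) (hsq : ¬ Summable fun n => ε n ^ 2) (d : ℕ → X) (f : ℕ → X →L[ℝ] ℝ)
    {τ : ℕ → ℝ} (hτ : ∀ j, 0 < τ j) :
    ∃ (x : ℕ → X) (xs : ℕ → X →L[ℝ] ℝ), (∀ n, IsBoundedBiorthogonalOn (Finset.range n) ε x xs) ∧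
      ∀ j, d j ∈ Submodule.span ℝ (Set.range x) ∧ f j ∈ Submodule.span ℝ (Set.range xs) ∧
        ∃ s a, HasFlatSums (τ j) s a x := by
  have hstep : ∀ j n (z : ℕ → X × (X →L[ℝ] ℝ)),
      IsBoundedBiorthogonalOn (Finset.range n) ε (Prod.fst ∘ z) (Prod.snd ∘ z) →
      ∃ n' > n, ∃ z' : ℕ → X × (X →L[ℝ] ℝ), Set.EqOn z' z (Set.Iio n) ∧
        IsBoundedBiorthogonalOn (Finset.range n') ε (Prod.fst ∘ z') (Prod.snd ∘ z') ∧
        d j ∈ Submodule.span ℝ ((Prod.fst ∘ z') '' Finset.range n') ∧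
        f j ∈ Submodule.span ℝ ((Prod.snd ∘ z') '' Finset.range n') ∧
        ∃ s ⊆ Finset.range n', ∃ a, HasFlatSums (τ j) s a (Prod.fst ∘ z') := fun j n z h => by
    obtain ⟨n', hn', y, ys, hy, hys, hext⟩ := h.exists_extension hX hε hε1 hsq (d j) (f j) (hτ j)
    rw [Finset.coe_range] at hy hys
    exact ⟨n', hn', fun i => (y i, ys i), fun i hi => Prod.ext (hy hi) (hys hi), hext⟩
  obtain ⟨z, hz⟩ := exists_seq_of_extension (z₀ := fun _ => 0)
    ⟨by simp, by simp, by simp⟩ hstep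
  refine ⟨Prod.fst ∘ z, Prod.snd ∘ z, fun n => ?_, fun j => ?_⟩
  · obtain ⟨n', hn', z', heq, hbi, -⟩ := hz n
    rw [← Finset.coe_range] at heq
    exact (hbi.congr (heq.symm.comp_left) heq.symm.comp_left).mono (Finset.range_mono hn')
  · obtain ⟨n, -, z', heq, -, hd, hf, s, hs, a, hflat⟩ := hz j
    rw [← Finset.coe_range] at heq
    rw [← Set.image_congr heq.comp_left] at hd hf
    exact ⟨Submodule.span_mono (Set.image_subset_range _ _) hd,
      Submodule.span_mono (Set.image_subset_range _ _) hf, s, a,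
      hflat.congr (heq.symm.comp_left.mono hs)⟩

theorem eq_zero_of_forall_apply_eq_zero {ι : Type*} {d : ι → X} (hd : DenseRange d)
    {f : ι → X →L[ℝ] ℝ} (hf : ∀ j, ‖f j‖ ≤ 1) (hfd : ∀ j, f j (d j) = ‖d j‖) {v : X}
    (hv : ∀ j, f j v = 0) : v = 0 := by
  by_contra hv0
  obtain ⟨j, hj⟩ := hd.exists_dist_lt v (half_pos (norm_pos_iff.2 hv0))
  rw [dist_eq_norm] at hj
  have hdj : ‖d j‖ ≤ ‖d j - v‖ := by
    calc ‖d j‖ = f j (d j - v) := by rw [map_sub, hv j, sub_zero, hfd j]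
      _ ≤ ‖f j (d j - v)‖ := le_abs_self _
      _ ≤ ‖d j - v‖ := by simpa using (f j).le_of_opNorm_le (hf j) (d j - v)
  linarith [norm_le_norm_add_norm_sub' v (d j), norm_sub_rev v (d j)]

end Limit

theorem exists_bounded_Mbasis_no_permutation_Schauder_general
    (X : Type*) [NormedAddCommGroup X] [NormedSpace ℝ X]
    [TopologicalSpace.SeparableSpace X] (hinf : ¬ FiniteDimensional ℝ X)
    (ε : ℕ → ℝ) (hε : ∀ n, 0 < ε n) (hsq : ¬ Summable fun n => ε n ^ 2) :
    ∃ (x : ℕ → X) (xs : ℕ → X →L[ℝ] ℝ),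
      (∀ m n, xs m (x n) = if m = n then 1 else 0) ∧
      (Submodule.span ℝ (Set.range x)).topologicalClosure = ⊤ ∧
      (∀ v : X, (∀ n, xs n v = 0) → v = 0) ∧
      (∀ n, ‖x n‖ * ‖xs n‖ ≤ 1 + ε n) ∧
      ∀ (σ : Equiv.Perm ℕ) (C : ℝ), ¬ HasPartialSumBound C (x ∘ σ) := by
  have hd := TopologicalSpace.denseRange_denseSeq X
  choose f hf hfd using fun j => exists_dual_vector'' ℝ (TopologicalSpace.denseSeq X j)
  obtain ⟨x, xs, hx, hspan⟩ := exists_biorthogonal_seq hinf (ε := fun n => min (ε n) 1)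
    (fun n => lt_min (hε n) one_pos) (fun n => min_le_right _ _) (not_summable_min_one_sq hsq)
    (TopologicalSpace.denseSeq X) f fun j => Nat.one_div_pos_of_nat
  refine ⟨x, xs, fun m n => ?_, ?_, fun v hv => ?_, fun n => ?_,
    not_hasPartialSumBound_comp_of_hasFlatSums tendsto_one_div_add_atTop_nhds_zero_nat
      fun j => (hspan j).2.2⟩
  · split_ifs with hmn
    · exact hmn ▸ (hx (m + 1)).apply_self m (Finset.self_mem_range_succ m)
    · exact (hx (max m n + 1)).apply_of_ne m (by simp) n (by simp) hmn
  · rw [← Submodule.dense_iff_topologicalClosure_eq_top]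
    exact hd.mono (Set.range_subset_iff.2 fun j => (hspan j).1)
  · have hker : Submodule.span ℝ (Set.range xs) ≤
        LinearMap.ker (NormedSpace.inclusionInDoubleDual ℝ X v).toLinearMap :=
      Submodule.span_le.2 (Set.range_subset_iff.2 hv)
    exact eq_zero_of_forall_apply_eq_zero hd hf hfd fun j => hker (hspan j).2.1
  · have hlt := (hx (n + 1)).norm_mul_lt n (Finset.self_mem_range_succ n)
    exact hlt.le.trans (by gcongr; exact min_le_left _ _)

/-- In any infinite-dimensional separable real Banach space `X`, for any
positive sequence `(ε n)` with `n · ε n → ∞` and `Σ ε n ² = ∞`, there is a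
`(1+ε n)`-bounded Markushevich basis of `X` such that for every permutation `σ` of `ℕ`
no constant `C` gives a uniform partial-sum bound; in particular no permutation of the
basis is equivalent to a Schauder basis of `X`. -/
theorem exists_bounded_Mbasis_no_permutation_Schauder
    (X : Type*) [NormedAddCommGroup X] [NormedSpace ℝ X] [CompleteSpace X]
    [TopologicalSpace.SeparableSpace X] (hinf : ¬ FiniteDimensional ℝ X)
    (ε : ℕ → ℝ) (hε : ∀ n, 0 < ε n)
    (hlim : Filter.Tendsto (fun n : ℕ => (n : ℝ) * ε n) Filter.atTop Filter.atTop)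
    (hsq : ¬ Summable (fun n => (ε n) ^ 2)) :
    ∃ (x : ℕ → X) (xs : ℕ → X →L[ℝ] ℝ),
      (∀ m n, xs m (x n) = if m = n then 1 else 0) ∧
      (Submodule.span ℝ (Set.range x)).topologicalClosure = ⊤ ∧
      (∀ v : X, (∀ n, xs n v = 0) → v = 0) ∧
      (∀ n, ‖x n‖ * ‖xs n‖ ≤ 1 + ε n) ∧
      (∀ σ : Equiv.Perm ℕ, ¬ ∃ C : ℝ,
        ∀ m n : ℕ, m ≤ n → ∀ a : ℕ → ℝ,
          ‖∑ i ∈ Finset.range m, a i • x (σ i)‖ ≤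
            C * ‖∑ i ∈ Finset.range n, a i • x (σ i)‖) := by
  obtain ⟨x, xs, hbi, hfund, htotal, hnorm, hperm⟩ :=
    exists_bounded_Mbasis_no_permutation_Schauder_general X hinf ε hε hsq
  exact ⟨x, xs, hbi, hfund, htotal, hnorm, fun σ ⟨C, hC⟩ => hperm σ C hC⟩
end
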